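/- Lipschitz estimate for the operator W: for l ≥ 1, α ∈ (0,1), ℓ₁, ℓ₂, v₁, v₂ ∈ C^{l,α} with ‖∇ℓᵢ‖_{l−1,α} ≤ L and ‖vᵢ‖_{l,α} ≤ V, there exists C = C(l, α, L) such that ‖W(ℓ₁,v₁) − W(ℓ₂,v₂)‖_{l,α} ≤ C(V ‖ℓ₁ − ℓ₂‖_{l,α} + ‖v₁ − v₂‖_{l,α}). -/

import Mathlib

noncomputable section

open MeasureTheory Real Set

abbrev V3 : Type := Fin 3 → ℝ

def pd (f : V3 → ℝ) (j : Fin 3) (x : V3) : ℝ := fderiv ℝ f x (Pi.single j 1)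

def Per {E : Type*} (f : V3 → E) : Prop :=
  ∀ (x : V3) (k : Fin 3 → ℤ), f (x + fun i => (k i : ℝ)) = f x

def TorusMap (g : V3 → V3) : Prop :=
  ∀ (x : V3) (k : Fin 3 → ℤ), g (x + fun i => (k i : ℝ)) = g x + fun i => (k i : ℝ)

def Box : Set V3 := Set.univ.pi fun _ => Set.Ioc (0:ℝ) 1

def l2inner (u v : V3 → V3) : ℝ := ∫ x in Box, ∑ i, u x i * v x i

def dirD (u v : V3 → V3) : V3 → V3 := fun x i => ∑ j, u x j * pd (fun y => v y i) j x

def lie (u v : V3 → V3) : V3 → V3 := fun x => dirD u v x - dirD v u x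

def jmT (σ w : V3 → V3) : V3 → V3 := fun x i => ∑ j, pd (fun y => σ y j) i x * w x j

def gradf (f : V3 → ℝ) : V3 → V3 := fun x i => pd f i x

def divg (u : V3 → V3) (x : V3) : ℝ := ∑ j, pd (fun y => u y j) j x

def curl (u : V3 → V3) : V3 → V3 := fun x =>
  ![pd (fun y => u y 2) 1 x - pd (fun y => u y 1) 2 x,
    pd (fun y => u y 0) 2 x - pd (fun y => u y 2) 0 x,
    pd (fun y => u y 1) 0 x - pd (fun y => u y 0) 1 x]

def cross (a b : V3) : V3 :=
  ![a 1 * b 2 - a 2 * b 1, a 2 * b 0 - a 0 * b 2, a 0 * b 1 - a 1 * b 0]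

def supN {E : Type*} [NormedAddCommGroup E] (f : V3 → E) : ℝ :=
  sSup (Set.range fun x => ‖f x‖)

def hSemi {E : Type*} [NormedAddCommGroup E] (α : ℝ) (f : V3 → E) : ℝ :=
  sSup {r | ∃ x y : V3, x ≠ y ∧ r = ‖f x - f y‖ / ‖x - y‖ ^ α}

def cNorm {E : Type*} [NormedAddCommGroup E] [NormedSpace ℝ E] (l : ℕ) (f : V3 → E) : ℝ :=
  ∑ m ∈ Finset.range (l + 1), supN (fun x => iteratedFDeriv ℝ m f x)

def holNorm {E : Type*} [NormedAddCommGroup E] [NormedSpace ℝ E] (l : ℕ) (α : ℝ) (f : V3 → E) : ℝ :=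
  cNorm l f + hSemi α (fun x => iteratedFDeriv ℝ l f x)

def MemHol {E : Type*} [NormedAddCommGroup E] [NormedSpace ℝ E] (l : ℕ) (α : ℝ) (f : V3 → E) : Prop :=
  ContDiff ℝ l f ∧ ∃ C, ∀ x y, ‖iteratedFDeriv ℝ l f x - iteratedFDeriv ℝ l f y‖ ≤ C * ‖x - y‖ ^ α

def jac (g : V3 → V3) : V3 → (V3 →L[ℝ] V3) := fun x => fderiv ℝ g x

def c1Norm (f : V3 → V3) : ℝ := supN f + supN (jac f)

def c1αNorm (α : ℝ) (f : V3 → V3) : ℝ := supN f + supN (jac f) + hSemi α (jac f)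

def IsFlow (u Y : ℝ → V3 → V3) (T : ℝ) : Prop :=
  (∀ x, Y 0 x = x) ∧ ∀ x, ∀ t ∈ Set.Icc 0 T, HasDerivAt (fun s => Y s x) (u t (Y t x)) t

def weberField (l v : V3 → V3) : V3 → V3 := fun x => v x + jmT l v x

def IsLeray (f w : V3 → V3) : Prop :=
  Per w ∧ ContDiff ℝ 1 w ∧ (∀ x, divg w x = 0) ∧
  ∃ p : V3 → ℝ, Per p ∧ Differentiable ℝ p ∧ ∀ x, f x = w x + gradf p x

def Inv3 (g h : V3 → V3) : Prop := (∀ x, h (g x) = x) ∧ ∀ x, g (h x) = x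

def pullb (g ginv u : V3 → V3) : V3 → V3 := fun x => fderiv ℝ ginv (g x) (u (g x))

def weber (ginv u₀ : V3 → V3) : V3 → V3 := jmT ginv (fun y => u₀ (ginv y))

def InU (l : ℕ) (α τ U : ℝ) (u₀ : V3 → V3) (u : ℝ → V3 → V3) : Prop :=
  (Continuous fun p : ℝ × V3 => u p.1 p.2) ∧ (∀ x, u 0 x = u₀ x) ∧
  ∀ t ∈ Set.Icc 0 τ, MemHol (l+1) α (u t) ∧ Per (u t) ∧ (∀ x, divg (u t) x = 0) ∧
    holNorm (l+1) α (u t) ≤ U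

def PhiRel (φ ψ : ℝ → V3 → V3) (u₀ : V3 → V3) (τ : ℝ) (u uhat : ℝ → V3 → V3) : Prop :=
  ∃ Y Yinv : ℝ → V3 → V3,
    IsFlow (fun t => pullb (φ t) (ψ t) (u t)) Y τ ∧
    (∀ t ∈ Set.Icc 0 τ, Inv3 (Y t) (Yinv t)) ∧
    ∀ t ∈ Set.Icc 0 τ, IsLeray (weber (fun x => Yinv t (ψ t x)) u₀) (uhat t)

section helpers
open Filter Topology
open scoped ContDiff
set_option linter.unusedSectionVars false


section basics
variable {E : Type} [NormedAddCommGroup E] [NormedSpace ℝ E]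

def e3 (k : Fin 3) : V3 := Pi.single k 1

def dk (k : Fin 3) (u : V3 → E) : V3 → E := fun x => fderiv ℝ u x (e3 k)

lemma e3_norm (k : Fin 3) : ‖e3 k‖ = 1 := by
  simp [e3, Pi.norm_single]

lemma v3_sum (x : V3) : x = ∑ k, x k • e3 k := by
  ext i
  simp [e3, Finset.sum_apply, Pi.single_apply]

lemma per_bdd {f : V3 → E} (hp : Per f) (hf : Continuous f) : ∃ M, 0 ≤ M ∧ ∀ x, ‖f x‖ ≤ M := by
  obtain ⟨M, hM⟩ := (isCompact_Icc (a := (0:V3)) (b := 1)).exists_bound_of_continuousOn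
    hf.continuousOn
  refine ⟨max M 0, le_max_right _ _, fun x => ?_⟩
  have h := hp (fun i => Int.fract (x i)) (fun i => ⌊x i⌋)
  have h2 : ((fun i => Int.fract (x i)) + fun i => ((⌊x i⌋ : ℤ) : ℝ)) = x := by
    ext i; simp [Int.fract_add_floor]
  rw [h2] at h
  rw [h]
  refine (hM _ ⟨fun i => Int.fract_nonneg _, fun i => (Int.fract_lt_one _).le⟩).trans (le_max_left _ _)

lemma per_fderiv {f : V3 → E} (hp : Per f) : Per (fderiv ℝ f) := by
  intro x k
  have : f = fun y => f (y + fun i => (k i : ℝ)) := by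
    funext y; exact (hp y k).symm
  conv_rhs => rw [this]
  rw [fderiv_comp_add_right]

lemma per_dk {f : V3 → E} (hp : Per f) (k : Fin 3) : Per (dk k f) := by
  intro x m
  simp only [dk]
  rw [per_fderiv hp x m]

lemma clm_norm_le {F : Type} [NormedAddCommGroup F] [NormedSpace ℝ F] (T : V3 →L[ℝ] F) (K : ℝ)
    (hK : ∀ k, ‖T (e3 k)‖ ≤ K) : ‖T‖ ≤ 3 * K := by
  have hK0 : 0 ≤ K := (norm_nonneg _).trans (hK 0)
  refine T.opNorm_le_bound (by positivity) fun x => ?_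
  conv_lhs => rw [v3_sum x]
  rw [map_sum]
  refine (norm_sum_le _ _).trans ?_
  have : ∀ k ∈ (Finset.univ : Finset (Fin 3)), ‖T (x k • e3 k)‖ ≤ ‖x‖ * K := by
    intro k _
    rw [map_smul, norm_smul]
    exact mul_le_mul (norm_le_pi_norm x k) (hK k) (norm_nonneg _) (norm_nonneg _)
  refine (Finset.sum_le_sum this).trans ?_
  simp; linarith

lemma contDiff_dk {n m : WithTop ℕ∞} {f : V3 → E} (hf : ContDiff ℝ n f) (h : m + 1 ≤ n) (k : Fin 3) :
    ContDiff ℝ m (dk k f) :=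
  (hf.fderiv_right h).clm_apply contDiff_const

lemma smooth_dk {f : V3 → E} (hf : ContDiff ℝ ∞ f) (k : Fin 3) : ContDiff ℝ ∞ (dk k f) :=
  contDiff_dk hf (by simp) k

lemma smooth_fderiv {f : V3 → E} (hf : ContDiff ℝ ∞ f) : ContDiff ℝ ∞ (fderiv ℝ f) :=
  hf.fderiv_right (by simp)

lemma cont_dk {f : V3 → E} (hf : ContDiff ℝ 1 f) (k : Fin 3) : Continuous (dk k f) :=
  (contDiff_dk (m := 0) hf (by simp) k).continuous

lemma smooth_one {f : V3 → E} (hf : ContDiff ℝ ∞ f) : ContDiff ℝ 1 f := hf.of_le (by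
  exact_mod_cast le_top)

lemma hcs_dk {f : V3 → E} (hf : HasCompactSupport f) (k : Fin 3) : HasCompactSupport (dk k f) :=
  (hf.fderiv (𝕜 := ℝ)).comp_left (g := fun T : V3 →L[ℝ] E => T (e3 k)) (by simp)

/-- symmetric second derivatives -/
lemma fderiv_dk {f : V3 → E} (hf : ContDiff ℝ ∞ f) (k : Fin 3) :
    fderiv ℝ (dk k f) = dk k (fderiv ℝ f) := by
  funext x
  ext v
  have hd : DifferentiableAt ℝ (fderiv ℝ f) x :=
    (smooth_fderiv hf).differentiable (by simp) x
  have h1 : fderiv ℝ (dk k f) x v = fderiv ℝ (fderiv ℝ f) x v (e3 k) := by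
    have : dk k f = fun y => (fderiv ℝ f y) (e3 k) := rfl
    rw [this, fderiv_clm_apply hd (differentiableAt_const _)]
    simp
  rw [h1]
  have hs : IsSymmSndFDerivAt ℝ f x := by
    apply ContDiffAt.isSymmSndFDerivAt (n := 2) (contDiff_infty.1 hf 2).contDiffAt
    simp
  exact hs v (e3 k)

lemma dk_comm {f : V3 → E} (hf : ContDiff ℝ ∞ f) (k j : Fin 3) :
    dk j (dk k f) = dk k (dk j f) := by
  funext x
  have h1 := fderiv_dk hf k
  have h2 := fderiv_dk hf j
  have hs : IsSymmSndFDerivAt ℝ f x := by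
    apply ContDiffAt.isSymmSndFDerivAt (n := 2) (contDiff_infty.1 hf 2).contDiffAt
    simp
  show fderiv ℝ (dk k f) x (e3 j) = fderiv ℝ (dk j f) x (e3 k)
  rw [h1, h2]
  exact hs (e3 k) (e3 j)

end basics

section avg
variable {E : Type} [NormedAddCommGroup E] [NormedSpace ℝ E]

def Av (θ : V3 → ℝ) (r : ℝ) (G : V3 → E) (x : V3) : E := ∫ z, θ z • G (x - r • z)

lemma Av_integrable {θ : V3 → ℝ} (hθ : Continuous θ) (hc : HasCompactSupport θ) (r : ℝ)
    {G : V3 → E} (hG : Continuous G) (x : V3) : Integrable (fun z => θ z • G (x - r • z)) :=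
  Continuous.integrable_of_hasCompactSupport (by fun_prop) (hc.smul_right)

lemma Av_hasFDerivAt {θ : V3 → ℝ} (hθ : Continuous θ) (hc : HasCompactSupport θ) (r : ℝ)
    {G : V3 → E} (hG : ContDiff ℝ 1 G) (hp : Per G) (x : V3) :
    HasFDerivAt (Av θ r G) (Av θ r (fderiv ℝ G) x) x := by
  have hGc := hG.continuous
  have hG' : Continuous (fderiv ℝ G) := hG.continuous_fderiv (by simp)
  obtain ⟨M, hM0, hM⟩ := per_bdd (per_fderiv hp) hG'
  refine hasFDerivAt_integral_of_dominated_of_fderiv_le (s := univ)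
    (bound := fun z => ‖θ z‖ * M) (F' := fun y z => θ z • fderiv ℝ G (y - r • z)) univ_mem ?_ ?_ ?_ ?_ ?_ ?_
  · exact Eventually.of_forall fun y => (Av_integrable hθ hc r hGc y).aestronglyMeasurable
  · exact Av_integrable hθ hc r hGc x
  · exact (Av_integrable hθ hc r hG' x).aestronglyMeasurable
  · refine Eventually.of_forall fun z y _ => ?_
    rw [norm_smul]
    exact mul_le_mul_of_nonneg_left (hM _) (norm_nonneg _)
  · exact (hθ.integrable_of_hasCompactSupport hc).norm.mul_const M
  · refine Eventually.of_forall fun z y _ => ?_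
    have h1 : HasFDerivAt G (fderiv ℝ G (y - r • z)) (y - r • z) :=
      (hG.differentiable (by simp) _).hasFDerivAt
    have h2 : HasFDerivAt (fun y : V3 => y - r • z) (ContinuousLinearMap.id ℝ V3) y :=
      (hasFDerivAt_id y).sub_const _
    have := (h1.comp y h2).const_smul (θ z)
    rw [ContinuousLinearMap.comp_id] at this
    exact this

lemma Av_hasDerivAt {θ : V3 → ℝ} (hθ : Continuous θ) (hc : HasCompactSupport θ) (r : ℝ)
    {G : V3 → E} (hG : ContDiff ℝ 1 G) (hp : Per G) (x : V3) :
    HasDerivAt (fun r => Av θ r G x) (- ∑ k, Av (fun z => z k * θ z) r (dk k G) x) r := by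
  have hGc := hG.continuous
  have hG' : Continuous (fderiv ℝ G) := hG.continuous_fderiv (by simp)
  obtain ⟨M, hM0, hM⟩ := per_bdd (per_fderiv hp) hG'
  have key := hasDerivAt_integral_of_dominated_loc_of_deriv_le (𝕜 := ℝ) (μ := volume) (s := univ) (x₀ := r)
    (F := fun r z => θ z • G (x - r • z))
    (bound := fun z => ‖θ z‖ * (M * ‖z‖)) (F' := fun r z => θ z • fderiv ℝ G (x - r • z) (-z)) univ_mem
    (Eventually.of_forall fun r => (Av_integrable hθ hc r hGc x).aestronglyMeasurable)
    (Av_integrable hθ hc r hGc x)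
    (Continuous.aestronglyMeasurable (by fun_prop)) ?_ ?_ ?_
  · have k2 := key.2
    have : ∀ z : V3, θ z • fderiv ℝ G (x - r • z) (-z)
        = - ∑ k, (z k * θ z) • dk k G (x - r • z) := by
      intro z
      conv_lhs => rw [map_neg]; arg 2; arg 1; arg 2; rw [v3_sum z]
      simp only [map_sum, map_smul, smul_neg, Finset.smul_sum, smul_smul, dk, mul_comm]
    have ee : (fun z => θ z • fderiv ℝ G (x - r • z) (-z))
        = fun z => - ∑ k, (z k * θ z) • dk k G (x - r • z) := by
      funext z
      exact this z
    rw [ee, integral_neg, integral_finsetSum] at k2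
    · exact k2
    · intro k _
      exact Av_integrable (by fun_prop) (hc.mul_left) r (cont_dk hG k) x
  · refine Eventually.of_forall fun z y _ => ?_
    rw [norm_smul]
    refine mul_le_mul_of_nonneg_left ?_ (norm_nonneg _)
    refine (ContinuousLinearMap.le_opNorm _ _).trans ?_
    rw [norm_neg]
    exact mul_le_mul_of_nonneg_right (hM _) (norm_nonneg _)
  · refine Continuous.integrable_of_hasCompactSupport (by fun_prop) ?_
    exact hc.norm.mul_right
  · refine Eventually.of_forall fun z y _ => ?_
    have h1 : HasFDerivAt G (fderiv ℝ G (x - y • z)) (x - y • z) :=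
      (hG.differentiable (by simp) _).hasFDerivAt
    have h2 : HasDerivAt (fun y : ℝ => x - y • z) (-z) y := by
      simpa using ((hasDerivAt_id y).smul_const z).const_sub x
    exact (h1.comp_hasDerivAt y h2).const_smul (θ z)

lemma Av_ibp {θ : V3 → ℝ} (hθ : ContDiff ℝ 1 θ) (hc : HasCompactSupport θ) (r : ℝ)
    {G : V3 → E} (hG : ContDiff ℝ 1 G) (k : Fin 3) (x : V3) :
    r • Av θ r (dk k G) x = Av (dk k θ) r G x := by
  have hd : ∀ z, HasFDerivAt (fun z : V3 => G (x - r • z))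
      (-(r • fderiv ℝ G (x - r • z))) z := by
    intro z
    have h1 : HasFDerivAt G (fderiv ℝ G (x - r • z)) (x - r • z) :=
      (hG.differentiable (by simp) _).hasFDerivAt
    have h2 : HasFDerivAt (fun z : V3 => x - r • z) (-(r • ContinuousLinearMap.id ℝ V3)) z :=
      ((hasFDerivAt_id z).const_smul r).const_sub x
    have h3 : -(r • fderiv ℝ G (x - r • z))
        = (fderiv ℝ G (x - r • z)).comp (-(r • ContinuousLinearMap.id ℝ V3)) := by
      ext v; simp
    rw [h3]
    exact h1.comp z h2
  have h := integral_bilinear_hasFDerivAt_right_eq_neg_left_of_integrable (μ := (volume : Measure V3))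
    (f := θ) (f' := fderiv ℝ θ) (g := fun z => G (x - r • z))
    (g' := fun z => -(r • fderiv ℝ G (x - r • z))) (v := e3 k)
    (B := ContinuousLinearMap.lsmul ℝ ℝ) ?_ ?_ ?_ (fun z _ => (hθ.differentiable (by simp) z).hasFDerivAt)
    (fun z _ => hd z)
  · simp only [ContinuousLinearMap.lsmul_apply, neg_apply,
      smul_apply, smul_neg, integral_neg, neg_inj] at h
    rw [show Av (dk k θ) r G x = ∫ z, (fderiv ℝ θ z) (e3 k) • G (x - r • z) from rfl, ← h]
    simp_rw [smul_comm _ r]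
    rw [integral_smul]
    rfl
  · exact Av_integrable (cont_dk hθ k) (hcs_dk hc k) r hG.continuous x
  · refine Continuous.integrable_of_hasCompactSupport ?_ ?_
    · have := hG.continuous_fderiv (by simp)
      have := hθ.continuous
      simp only [ContinuousLinearMap.lsmul_apply, neg_apply,
      smul_apply]
      fun_prop
    · exact hc.smul_right
  · exact Av_integrable hθ.continuous hc r hG.continuous x

lemma Av_norm_le {θ : V3 → ℝ} (hθ : Continuous θ) (hc : HasCompactSupport θ) (r : ℝ)
    {G : V3 → E} {M : ℝ} (hM : ∀ x, ‖G x‖ ≤ M) (x : V3) :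
    ‖Av θ r G x‖ ≤ (∫ z, |θ z|) * M := by
  rw [← integral_mul_const]
  refine norm_integral_le_of_norm_le ?_ (Eventually.of_forall fun z => ?_)
  · exact (hθ.integrable_of_hasCompactSupport hc).abs.mul_const M
  · rw [norm_smul]
    exact mul_le_mul_of_nonneg_left (hM _) (norm_nonneg _)

end avg


lemma kernel_exists : ∃ φ ψ : V3 → ℝ, ContDiff ℝ ∞ φ ∧ ContDiff ℝ ∞ ψ ∧ HasCompactSupport φ ∧
    HasCompactSupport ψ ∧ (∀ k, dk k ψ = fun z => z k * φ z) ∧ ∫ z, φ z = 1 := by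
  let b : ContDiffBump (0:ℝ) := ⟨1, 2, by norm_num, by norm_num⟩
  let Ψ : ℝ → ℝ := fun t => ∫ s in (2:ℝ)..t, b s
  have hbc : Continuous b := b.continuous
  have hΨ : ∀ t, HasDerivAt Ψ (b t) t := fun t =>
    intervalIntegral.integral_hasDerivAt_right (hbc.intervalIntegrable _ _)
      hbc.aestronglyMeasurable.stronglyMeasurableAtFilter hbc.continuousAt
  have hΨs : ContDiff ℝ ∞ Ψ := by
    rw [contDiff_infty_iff_deriv]
    refine ⟨fun t => (hΨ t).differentiableAt, ?_⟩
    have : deriv Ψ = b := funext fun t => (hΨ t).deriv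
    rw [this]; exact b.contDiff
  have hb0 : ∀ t, 2 ≤ t → b t = 0 := by
    intro t ht
    apply b.zero_of_le_dist
    rw [Real.dist_eq, sub_zero]
    exact ht.trans (le_abs_self t)
  have hΨ0 : ∀ t, 2 ≤ t → Ψ t = 0 := by
    intro t ht
    show ∫ s in (2:ℝ)..t, b s = 0
    rw [intervalIntegral.integral_congr (g := fun _ => (0:ℝ))]
    · simp
    · intro s hs
      rw [uIcc_of_le ht] at hs
      exact hb0 s hs.1
  let q : V3 → ℝ := fun z => ∑ i, z i ^ 2
  have hq : ContDiff ℝ ∞ q := by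
    show ContDiff ℝ ∞ (fun z : V3 => ∑ i, z i ^ 2)
    fun_prop
  have hq2 : ∀ z : V3, z ∉ Metric.closedBall (0:V3) 2 → 2 ≤ q z := by
    intro z hz
    rw [mem_closedBall_zero_iff, pi_norm_le_iff_of_nonneg (by norm_num)] at hz
    push Not at hz
    obtain ⟨i, hi⟩ := hz
    have h1 : z i ^ 2 ≤ q z := Finset.single_le_sum (f := fun i => z i ^ 2)
      (fun i _ => sq_nonneg _) (Finset.mem_univ i)
    have h2 : z i ^ 2 = ‖z i‖ ^ 2 := by simp
    nlinarith
  let φ0 : V3 → ℝ := fun z => 2 * b (q z)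
  let ψ0 : V3 → ℝ := fun z => Ψ (q z)
  have hφ0 : ContDiff ℝ ∞ φ0 := contDiff_const.mul (b.contDiff.comp hq)
  have hψ0 : ContDiff ℝ ∞ ψ0 := hΨs.comp hq
  have hcφ : HasCompactSupport φ0 := HasCompactSupport.intro (isCompact_closedBall (0:V3) 2)
    fun z hz => by simp [φ0, hb0 _ (hq2 z hz)]
  have hcψ : HasCompactSupport ψ0 := HasCompactSupport.intro (isCompact_closedBall (0:V3) 2)
    fun z hz => by simp [ψ0, hΨ0 _ (hq2 z hz)]
  have hd : ∀ k z, dk k ψ0 z = z k * φ0 z := by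
    intro k z
    have h1 : HasFDerivAt q (∑ i, (2 * z i) • (ContinuousLinearMap.proj (R := ℝ) (φ := fun _ : Fin 3 => ℝ) i)) z := by
      apply HasFDerivAt.fun_sum
      intro i _
      have := ((ContinuousLinearMap.proj (R := ℝ) (φ := fun _ : Fin 3 => ℝ) i).hasFDerivAt (x := z)).pow 2
      simpa using this
    have h2 := (hΨ (q z)).comp_hasFDerivAt z h1
    have h3 : fderiv ℝ ψ0 z = _ := h2.fderiv
    simp only [dk]
    rw [h3]
    simp [e3, Pi.single_apply, φ0]
    ring
  have hpos : 0 < ∫ z, φ0 z := by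
    rw [integral_pos_iff_support_of_nonneg]
    · refine IsOpen.measure_pos _ ?_ ⟨0, ?_⟩
      · exact hφ0.continuous.isOpen_support
      · simp only [Function.mem_support, φ0, q]
        have : b 0 = 1 := b.one_of_mem_closedBall (by simp [b])
        simp [this]
    · intro z
      have : 0 ≤ b (q z) := b.nonneg
      simp only [φ0, Pi.zero_apply]; positivity
    · exact hφ0.continuous.integrable_of_hasCompactSupport hcφ
  set I := ∫ z, φ0 z with hI
  refine ⟨fun z => I⁻¹ * φ0 z, fun z => I⁻¹ * ψ0 z, contDiff_const.mul hφ0, contDiff_const.mul hψ0,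
    hcφ.mul_left, hcψ.mul_left, ?_, ?_⟩
  · intro k
    funext z
    have : dk k (fun z => I⁻¹ * ψ0 z) z = I⁻¹ * dk k ψ0 z := by
      simp only [dk]
      rw [fderiv_const_mul (hψ0.differentiable (by simp) z)]
      simp
    rw [this, hd]; ring
  · rw [integral_const_mul, ← hI, inv_mul_cancel₀ hpos.ne']

lemma deriv_rpow_bound {E : Type} [NormedAddCommGroup E] [NormedSpace ℝ E] {f f' : ℝ → E} {A β : ℝ}
    (hβ : β + 1 ≠ 0) (hf : ∀ r > 0, HasDerivAt f (f' r) r) (hb : ∀ r > 0, ‖f' r‖ ≤ A * r ^ β)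
    {a c : ℝ} (ha : 0 < a) (hac : a ≤ c) :
    ‖f c - f a‖ ≤ A * ((c ^ (β + 1) - a ^ (β + 1)) / (β + 1)) := by
  have hB : ∀ r > 0, HasDerivAt (fun r : ℝ => A * ((r ^ (β + 1) - a ^ (β + 1)) / (β + 1))) (A * r ^ β) r := by
    intro r hr
    have h := (((Real.hasDerivAt_rpow_const (x := r) (p := β + 1) (Or.inl hr.ne')).sub_const
      (a ^ (β + 1))).div_const (β + 1)).const_mul A
    have e1 : A * ((β + 1) * r ^ (β + 1 - 1) / (β + 1)) = A * r ^ β := by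
      rw [add_sub_cancel_right]; field_simp
    rwa [e1] at h
  have hpos : ∀ x ∈ Icc a c, 0 < x := fun x hx => ha.trans_le hx.1
  refine image_norm_le_of_norm_deriv_right_le_deriv_boundary' (f := fun r => f r - f a) (f' := f')
    (B := fun r : ℝ => A * ((r ^ (β + 1) - a ^ (β + 1)) / (β + 1)))
    (B' := fun r => A * r ^ β) (a := a) (b := c)
    ?_ ?_ ?_ ?_ ?_ ?_ (right_mem_Icc.2 hac)
  · exact fun x hx => ((hf x (hpos x hx)).sub_const _).continuousAt.continuousWithinAt
  · exact fun x hx => ((hf x (hpos x ⟨hx.1, hx.2.le⟩)).sub_const _).hasDerivWithinAt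
  · simp
  · exact fun x hx => (hB x (hpos x hx)).continuousAt.continuousWithinAt
  · exact fun x hx => (hB x (hpos x ⟨hx.1, hx.2.le⟩)).hasDerivWithinAt
  · exact fun x hx => hb x (hpos x ⟨hx.1, hx.2.le⟩)

section core
variable {E : Type} [NormedAddCommGroup E] [NormedSpace ℝ E] [CompleteSpace E]

def cM (α : ℝ) (θ : V3 → ℝ) : ℝ := ∫ z, |θ z| * ‖z‖ ^ α

lemma cM_nonneg (α : ℝ) (θ : V3 → ℝ) : 0 ≤ cM α θ :=
  integral_nonneg fun z => by positivity

lemma Av_osc {α : ℝ} (hα : 0 < α) {θ : V3 → ℝ} (hθ : ContDiff ℝ ∞ θ) (hc : HasCompactSupport θ)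
    {r : ℝ} (hr : 0 < r) {F : V3 → E} (hF : Continuous F) {K : ℝ}
    (hK : ∀ x y, ‖F x - F y‖ ≤ K * ‖x - y‖ ^ α) (k : Fin 3) (x : V3) :
    ‖Av (dk k θ) r F x‖ ≤ K * r ^ α * cM α (dk k θ) := by
  have hθ' := cont_dk (smooth_one hθ) k
  have hc' := hcs_dk hc k
  have h0 : Av (dk k θ) r (fun _ => F x) x = 0 := by
    rw [← Av_ibp (smooth_one hθ) hc r (contDiff_const) k x]
    simp [Av, dk]
  have h1 : Av (dk k θ) r F x = ∫ z, dk k θ z • (F (x - r • z) - F x) := by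
    rw [← sub_zero (Av (dk k θ) r F x), ← h0]
    simp only [Av, smul_sub]
    rw [integral_sub]
    · exact Av_integrable hθ' hc' r hF x
    · exact Av_integrable hθ' hc' r continuous_const x
  rw [h1, cM, ← integral_const_mul]
  refine norm_integral_le_of_norm_le ?_ (Eventually.of_forall fun z => ?_)
  · refine Integrable.const_mul ?_ _
    refine Continuous.integrable_of_hasCompactSupport ?_ ?_
    · exact hθ'.abs.mul (continuous_norm.rpow_const fun z => Or.inr hα.le)
    · exact (hc'.norm).mul_right
  · rw [norm_smul, Real.norm_eq_abs]
    have h2 := hK (x - r • z) x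
    have h3 : ‖x - r • z - x‖ = r * ‖z‖ := by
      rw [sub_sub_cancel_left, norm_neg, norm_smul, Real.norm_eq_abs, abs_of_pos hr]
    rw [h3, Real.mul_rpow hr.le (norm_nonneg _)] at h2
    calc _ ≤ |dk k θ z| * (K * (r ^ α * ‖z‖ ^ α)) := mul_le_mul_of_nonneg_left h2 (abs_nonneg _)
      _ = _ := by ring

lemma Av_osc2 {α : ℝ} (hα : 0 < α) {θ : V3 → ℝ} (hθ : ContDiff ℝ ∞ θ) (hc : HasCompactSupport θ)
    {r : ℝ} (hr : 0 < r) {F : V3 → E} (hF : ContDiff ℝ ∞ F) (hp : Per F) {K : ℝ} (hK0 : 0 ≤ K)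
    (hK : ∀ x y, ‖F x - F y‖ ≤ K * ‖x - y‖ ^ α) (x y : V3) :
    ‖Av θ r F x - Av θ r F y‖ ≤ 3 * (K * r ^ (α - 1) * ∑ i, cM α (dk i θ)) * ‖x - y‖ := by
  have hF1 := smooth_one hF
  refine Convex.norm_image_sub_le_of_norm_hasFDerivWithin_le (𝕜 := ℝ) (s := univ)
    (fun z _ => (Av_hasFDerivAt hθ.continuous hc r hF1 hp z).hasFDerivWithinAt) ?_ convex_univ
    (mem_univ _) (mem_univ _)
  intro z _
  apply clm_norm_le
  intro i
  have h1 : (Av θ r (fderiv ℝ F) z) (e3 i) = Av θ r (dk i F) z := by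
    rw [Av, ContinuousLinearMap.integral_apply]
    · rfl
    · exact Av_integrable hθ.continuous hc r (hF1.continuous_fderiv (by simp)) z
  have h2 := Av_ibp (smooth_one hθ) hc r hF1 i z
  have h3 := Av_osc hα hθ hc hr hF.continuous hK i z
  rw [← h2, norm_smul, Real.norm_eq_abs, abs_of_pos hr] at h3
  rw [h1]
  have h4 : cM α (dk i θ) ≤ ∑ i, cM α (dk i θ) := Finset.single_le_sum
    (f := fun i => cM α (dk i θ)) (fun i _ => cM_nonneg _ _) (Finset.mem_univ i)
  have h5 : K * r ^ α * cM α (dk i θ) ≤ K * r ^ α * ∑ i, cM α (dk i θ) :=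
    mul_le_mul_of_nonneg_left h4 (by positivity)
  have h6 : r ^ (α - 1) = r ^ α / r := Real.rpow_sub_one hr.ne' α
  rw [h6]
  have : K * (r ^ α / r) * ∑ i, cM α (dk i θ) = (K * r ^ α * ∑ i, cM α (dk i θ)) / r := by ring
  rw [this, le_div_iff₀ hr]
  linarith

/-- radial derivative identity -/
lemma Av_radial {φ ψ : V3 → ℝ} (hφ : ContDiff ℝ ∞ φ) (hψ : ContDiff ℝ ∞ ψ) (hcφ : HasCompactSupport φ)
    (hcψ : HasCompactSupport ψ) (hφψ : ∀ k, dk k ψ = fun z => z k * φ z)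
    {u : V3 → E} {F : Fin 3 → V3 → E} (hu : ContDiff ℝ ∞ u) (hpu : Per u)
    (hF : ∀ k, ContDiff ℝ ∞ (F k))
    (heq : ∀ x, ∑ k, dk k (dk k u) x = ∑ k, dk k (F k) x) (j : Fin 3) (x : V3) {r : ℝ} (hr : 0 < r) :
    HasDerivAt (fun r => Av φ r (dk j u) x) (-(r⁻¹ • ∑ k, Av (dk k (dk j ψ)) r (F k) x)) r := by
  have hg := smooth_dk hu j
  have h := Av_hasDerivAt hφ.continuous hcφ r (smooth_one hg) (per_dk hpu j) x
  convert h using 2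
  rw [inv_smul_eq_iff₀ hr.ne']
  have hψ1 := smooth_one hψ
  have e1 : ∀ k, Av (fun z => z k * φ z) r (dk k (dk j u)) x
      = Av (dk j ψ) r (dk k (dk k u)) x := by
    intro k
    rw [← hφψ k, ← Av_ibp hψ1 hcψ r (smooth_one (smooth_dk hg k)) k x,
      ← Av_ibp hψ1 hcψ r (smooth_one (smooth_dk (smooth_dk hu k) k)) j x, dk_comm hu j k,
      dk_comm (smooth_dk hu k) j k]
  have hψj := smooth_dk hψ j
  have hcj := hcs_dk hcψ j
  simp_rw [e1]
  have e2 : ∑ k, Av (dk j ψ) r (dk k (dk k u)) x = ∑ k, Av (dk j ψ) r (dk k (F k)) x := by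
    simp only [Av]
    rw [← integral_finsetSum, ← integral_finsetSum]
    · simp_rw [← Finset.smul_sum, heq]
    · intro k _
      exact Av_integrable hψj.continuous hcj r (smooth_dk (hF k) k).continuous x
    · intro k _
      exact Av_integrable hψj.continuous hcj r (smooth_dk (smooth_dk hu k) k).continuous x
  rw [e2, Finset.smul_sum]
  refine Finset.sum_congr rfl fun k _ => ?_
  rw [Av_ibp (smooth_one hψj) hcj r (smooth_one (hF k)) k x]

end core

theorem core_holder {α : ℝ} (hα : α ∈ Ioo (0:ℝ) 1) : ∃ C, 0 ≤ C ∧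
    ∀ (E : Type) [NormedAddCommGroup E] [NormedSpace ℝ E] [CompleteSpace E]
    (u : V3 → E) (F : Fin 3 → V3 → E) (K : ℝ), ContDiff ℝ ∞ u → Per u →
    (∀ k, ContDiff ℝ ∞ (F k)) → (∀ k, Per (F k)) →
    (∀ x, ∑ k, dk k (dk k u) x = ∑ k, dk k (F k) x) → 0 ≤ K →
    (∀ k x y, ‖F k x - F k y‖ ≤ K * ‖x - y‖ ^ α) →
    ∀ j x y, ‖dk j u x - dk j u y‖ ≤ C * K * ‖x - y‖ ^ α := by
  obtain ⟨hα0, hα1⟩ := hα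
  obtain ⟨φ, ψ, hφ, hψ, hcφ, hcψ, hφψ, hI⟩ := kernel_exists
  set C1 : Fin 3 → ℝ := fun j => ∑ k, cM α (dk k (dk j ψ)) with hC1
  set C2 : Fin 3 → ℝ := fun j => ∑ k, ∑ i, cM α (dk i (dk k (dk j ψ))) with hC2
  have hC1n : ∀ j, 0 ≤ C1 j := fun j => Finset.sum_nonneg fun k _ => cM_nonneg _ _
  have hC2n : ∀ j, 0 ≤ C2 j := fun j => Finset.sum_nonneg fun k _ =>
    Finset.sum_nonneg fun k _ => cM_nonneg _ _
  have hα1' : 0 < 1 - α := by linarith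
  refine ⟨∑ j, (2 * C1 j / α + 3 * C2 j / (1 - α)), ?_, ?_⟩
  · refine Finset.sum_nonneg fun j _ => ?_
    have := hC1n j; have := hC2n j
    positivity
  intro E _ _ _ u F K hu hpu hF hpF heq hK0 hK j x y
  rcases eq_or_ne x y with rfl | hxy
  · simp only [sub_self, norm_zero]
    rw [Real.zero_rpow hα0.ne', mul_zero]
  set R := ‖x - y‖ with hR
  have hR0 : 0 < R := norm_pos_iff.2 (sub_ne_zero.2 hxy)
  have hg := smooth_dk hu j
  have hpg := per_dk hpu j
  have hψj := smooth_dk hψ j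
  have hcj := hcs_dk hcψ j
  -- near estimate
  have near : ∀ x, ‖Av φ R (dk j u) x - dk j u x‖ ≤ C1 j * K * (R ^ α / α) := by
    intro x
    have hd := fun (r : ℝ) (hr : r > 0) => Av_radial hφ hψ hcφ hcψ hφψ hu hpu hF heq j x hr
    have hb : ∀ r > 0, ‖-(r⁻¹ • ∑ k, Av (dk k (dk j ψ)) r (F k) x)‖ ≤ (C1 j * K) * r ^ (α - 1) := by
      intro r hr
      rw [norm_neg, norm_smul, norm_inv, Real.norm_eq_abs, abs_of_pos hr, Real.rpow_sub_one hr.ne']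
      have : ‖∑ k, Av (dk k (dk j ψ)) r (F k) x‖ ≤ C1 j * K * r ^ α := by
        refine (norm_sum_le _ _).trans ?_
        rw [hC1, mul_assoc, Finset.sum_mul]
        refine Finset.sum_le_sum fun k _ => ?_
        have := Av_osc hα0 hψj hcj hr (hF k).continuous (hK k) k x
        linarith
      calc _ ≤ r⁻¹ * (C1 j * K * r ^ α) := mul_le_mul_of_nonneg_left this (by positivity)
        _ = _ := by ring
    have h1 : ∀ a ∈ Ioo 0 R, ‖Av φ R (dk j u) x - Av φ a (dk j u) x‖ ≤ C1 j * K * (R ^ α / α) := by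
      intro a ha
      have := deriv_rpow_bound (β := α - 1) (by linarith) hd hb ha.1 ha.2.le
      refine this.trans ?_
      rw [sub_add_cancel]
      refine mul_le_mul_of_nonneg_left ?_ (mul_nonneg (hC1n j) hK0)
      gcongr
      have := Real.rpow_nonneg ha.1.le α
      linarith
    have hcont : ContinuousAt (fun r => Av φ r (dk j u) x) 0 :=
      (Av_hasDerivAt hφ.continuous hcφ 0 (smooth_one hg) hpg x).continuousAt
    have h0 : Av φ 0 (dk j u) x = dk j u x := by
      simp only [Av, zero_smul, sub_zero]
      rw [integral_smul_const, hI, one_smul]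
    have hlim : Tendsto (fun a => ‖Av φ R (dk j u) x - Av φ a (dk j u) x‖) (𝓝[>] 0)
        (𝓝 ‖Av φ R (dk j u) x - dk j u x‖) := by
      rw [← h0]
      exact ((tendsto_const_nhds.sub hcont.tendsto).norm).mono_left nhdsWithin_le_nhds
    refine le_of_tendsto hlim ?_
    filter_upwards [Ioo_mem_nhdsGT hR0] with a ha using h1 a ha
  -- far estimate
  have far : ‖Av φ R (dk j u) x - Av φ R (dk j u) y‖ ≤ 3 * C2 j * K * (R ^ α / (1 - α)) := by
    obtain ⟨M, hM0, hM⟩ := per_bdd hpu hu.continuous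
    have hd := fun (r : ℝ) (hr : r > 0) =>
      (Av_radial hφ hψ hcφ hcψ hφψ hu hpu hF heq j x hr).sub
      (Av_radial hφ hψ hcφ hcψ hφψ hu hpu hF heq j y hr)
    have hb : ∀ r > 0, ‖-(r⁻¹ • ∑ k, Av (dk k (dk j ψ)) r (F k) x) -
        -(r⁻¹ • ∑ k, Av (dk k (dk j ψ)) r (F k) y)‖ ≤ (3 * C2 j * K * R) * r ^ (α - 2) := by
      intro r hr
      rw [neg_sub_neg, ← smul_sub, ← Finset.sum_sub_distrib, norm_smul, norm_inv, Real.norm_eq_abs,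
        abs_of_pos hr]
      have h2 : r ^ (α - 2) = r⁻¹ * r ^ (α - 1) := by
        rw [← Real.rpow_neg_one, ← Real.rpow_add hr]; congr 1; ring
      have : ‖∑ k, (Av (dk k (dk j ψ)) r (F k) y - Av (dk k (dk j ψ)) r (F k) x)‖
          ≤ 3 * C2 j * K * R * r ^ (α - 1) := by
        refine (norm_sum_le _ _).trans ?_
        have : 3 * C2 j * K * R * r ^ (α - 1)
           = ∑ k, 3 * (K * r ^ (α - 1) * ∑ i, cM α (dk i (dk k (dk j ψ)))) * R := by
          rw [← Finset.sum_mul, ← Finset.mul_sum, ← Finset.mul_sum]; ring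
        rw [this]
        refine Finset.sum_le_sum fun k _ => ?_
        rw [norm_sub_rev]
        exact Av_osc2 hα0 (smooth_dk hψj k) (hcs_dk hcj k) hr (hF k) (hpF k) hK0 (hK k) x y
      calc _ ≤ r⁻¹ * (3 * C2 j * K * R * r ^ (α - 1)) :=
            mul_le_mul_of_nonneg_left this (by positivity)
        _ = _ := by rw [h2]; ring
    set D : ℝ → E := fun r => Av φ r (dk j u) x - Av φ r (dk j u) y with hD
    set m := ∫ z, |dk j φ z| with hm
    have hfar : ∀ T > 0, ‖D T‖ ≤ 2 * (m * M) * T⁻¹ := by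
      intro T hT
      have h1 : ∀ x, ‖Av φ T (dk j u) x‖ ≤ m * M * T⁻¹ := by
        intro x
        have h1 := Av_norm_le (cont_dk (smooth_one hφ) j) (hcs_dk hcφ j) T hM x
        rw [← Av_ibp (smooth_one hφ) hcφ T (smooth_one hu) j x, norm_smul, Real.norm_eq_abs,
          abs_of_pos hT] at h1
        rw [← div_eq_mul_inv, le_div_iff₀ hT]
        linarith
      refine (norm_sub_le _ _).trans ?_
      have := h1 x; have := h1 y
      linarith
    have hS : ∀ T ∈ Ioi R, ‖D R‖ ≤ 2 * (m * M) * T⁻¹ + 3 * C2 j * K * (R ^ α / (1 - α)) := by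
      intro T hT
      have hT : R < T := hT
      have h1 := deriv_rpow_bound (β := α - 2) (f := D) (by linarith) hd hb hR0 hT.le
      have h2 := hfar T (hR0.trans hT)
      have h3 : 3 * C2 j * K * R * ((T ^ (α - 2 + 1) - R ^ (α - 2 + 1)) / (α - 2 + 1))
          ≤ 3 * C2 j * K * (R ^ α / (1 - α)) := by
        have e : α - 2 + 1 = -(1 - α) := by ring
        have e1 : R ^ α = R * R ^ (-(1 - α)) := by
          rw [show -(1 - α) = α - 1 by ring, Real.rpow_sub_one hR0.ne']; field_simp
        rw [e, e1]
        have hT' : 0 ≤ T ^ (-(1 - α)) := Real.rpow_nonneg (hR0.trans hT).le _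
        have : (T ^ (-(1 - α)) - R ^ (-(1 - α))) / (-(1 - α)) ≤ R ^ (-(1 - α)) / (1 - α) := by
          rw [div_neg, ← neg_div]
          gcongr
          linarith
        have hh : 0 ≤ 3 * C2 j * K * R := by have := hC2n j; positivity
        calc _ ≤ 3 * C2 j * K * R * (R ^ (-(1 - α)) / (1 - α)) := mul_le_mul_of_nonneg_left this hh
          _ = _ := by ring
      have h4 : ‖D R‖ ≤ ‖D T‖ + ‖D T - D R‖ := by
        have := norm_sub_le (D T) (D T - D R)
        rwa [sub_sub_cancel] at this
      linarith
    have hlim : Tendsto (fun T : ℝ => 2 * (m * M) * T⁻¹ + 3 * C2 j * K * (R ^ α / (1 - α))) atTop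
        (𝓝 (2 * (m * M) * 0 + 3 * C2 j * K * (R ^ α / (1 - α)))) :=
      (tendsto_inv_atTop_zero.const_mul _).add_const _
    have := ge_of_tendsto hlim (by filter_upwards [Ioi_mem_atTop R] with T hT using hS T hT)
    simpa [hD] using this
  have h1 := near x
  have h2 := near y
  have h3 : ‖dk j u x - dk j u y‖ ≤ ‖Av φ R (dk j u) x - dk j u x‖ + ‖Av φ R (dk j u) y - dk j u y‖
      + ‖Av φ R (dk j u) x - Av φ R (dk j u) y‖ := by
    have : dk j u x - dk j u y = -(Av φ R (dk j u) x - dk j u x) + (Av φ R (dk j u) y - dk j u y)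
      + (Av φ R (dk j u) x - Av φ R (dk j u) y) := by abel
    rw [this]
    refine (norm_add₃_le).trans ?_
    rw [norm_neg]
  have h4 : 2 * C1 j / α + 3 * C2 j / (1 - α) ≤ ∑ j, (2 * C1 j / α + 3 * C2 j / (1 - α)) :=
    Finset.single_le_sum (f := fun j => 2 * C1 j / α + 3 * C2 j / (1 - α))
      (fun j _ => by have := hC1n j; have := hC2n j; positivity) (Finset.mem_univ j)
  have h5 := mul_le_mul_of_nonneg_right h4 (by positivity : 0 ≤ K * R ^ α)
  have h6 : (2 * C1 j / α + 3 * C2 j / (1 - α)) * (K * R ^ α)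
    = C1 j * K * (R ^ α / α) + C1 j * K * (R ^ α / α) + 3 * C2 j * K * (R ^ α / (1 - α)) := by ring
  rw [mul_assoc]
  linarith


section hb
variable {E : Type} [NormedAddCommGroup E] [NormedSpace ℝ E]
variable {G : Type} [NormedAddCommGroup G] [NormedSpace ℝ G]

structure HB (n : ℕ) (α K : ℝ) (f : V3 → E) : Prop where
  cd : ContDiff ℝ n f
  bd : ∀ i ≤ n, ∀ x, ‖iteratedFDeriv ℝ i f x‖ ≤ K
  ho : ∀ i ≤ n, ∀ x y, ‖iteratedFDeriv ℝ i f x - iteratedFDeriv ℝ i f y‖ ≤ K * ‖x - y‖ ^ α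

variable {n : ℕ} {α K K' : ℝ} {f g : V3 → E}

lemma HB.nonneg (h : HB n α K f) : 0 ≤ K := (norm_nonneg _).trans (h.bd 0 (Nat.zero_le _) 0)

lemma HB.mono (h : HB n α K f) (hK : K ≤ K') : HB n α K' f :=
  ⟨h.cd, fun i hi x => (h.bd i hi x).trans hK, fun i hi x y => (h.ho i hi x y).trans
    (mul_le_mul_of_nonneg_right hK (by positivity))⟩

lemma HB.zero_iff : HB 0 α K f ↔ Continuous f ∧ (∀ x, ‖f x‖ ≤ K) ∧
    ∀ x y, ‖f x - f y‖ ≤ K * ‖x - y‖ ^ α := by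
  have e : ∀ x y, ‖iteratedFDeriv ℝ 0 f x - iteratedFDeriv ℝ 0 f y‖ = ‖f x - f y‖ := by
    intro x y
    rw [iteratedFDeriv_zero_eq_comp, Function.comp, Function.comp, ← map_sub,
      LinearIsometryEquiv.norm_map]
  constructor
  · intro h
    refine ⟨h.cd.continuous, fun x => ?_, fun x y => ?_⟩
    · simpa using h.bd 0 le_rfl x
    · simpa [e] using h.ho 0 le_rfl x y
  · rintro ⟨h1, h2, h3⟩
    refine ⟨by simpa using h1, ?_, ?_⟩
    · intro i hi x
      obtain rfl : i = 0 := by omega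
      simpa using h2 x
    · intro i hi x y
      obtain rfl : i = 0 := by omega
      rw [e]; exact h3 x y

lemma iter_succ_sub (i : ℕ) (x y : V3) :
    ‖iteratedFDeriv ℝ (i+1) f x - iteratedFDeriv ℝ (i+1) f y‖
      = ‖iteratedFDeriv ℝ i (fderiv ℝ f) x - iteratedFDeriv ℝ i (fderiv ℝ f) y‖ := by
  simp only [iteratedFDeriv_succ_eq_comp_right, Function.comp_apply]
  rw [← dist_eq_norm, ← dist_eq_norm]
  exact LinearIsometryEquiv.dist_map _ _ _

lemma HB.succ_iff : HB (n+1) α K f ↔ Differentiable ℝ f ∧ HB 0 α K f ∧ HB n α K (fderiv ℝ f) := by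
  constructor
  · intro h
    have h1 : ContDiff ℝ ((n:WithTop ℕ∞)+1) f := by exact_mod_cast h.cd
    refine ⟨h1.differentiable (by simp), ⟨h.cd.of_le (by simp), fun i hi => h.bd i (by omega),
      fun i hi => h.ho i (by omega)⟩, ⟨h1.fderiv_right le_rfl, fun i hi x => ?_, fun i hi x y => ?_⟩⟩
    · rw [norm_iteratedFDeriv_fderiv]; exact h.bd (i+1) (by omega) x
    · rw [← iter_succ_sub]; exact h.ho (i+1) (by omega) x y
  · rintro ⟨h1, h2, h3⟩
    refine ⟨?_, ?_, ?_⟩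
    · have : ContDiff ℝ ((n:WithTop ℕ∞)+1) f := contDiff_succ_iff_fderiv.2 ⟨h1, by simp, h3.cd⟩
      exact_mod_cast this
    · intro i hi x
      cases i with
      | zero => exact h2.bd 0 le_rfl x
      | succ i => rw [← norm_iteratedFDeriv_fderiv]; exact h3.bd i (by omega) x
    · intro i hi x y
      cases i with
      | zero => exact h2.ho 0 le_rfl x y
      | succ i => rw [iter_succ_sub]; exact h3.ho i (by omega) x y

lemma HB.of_le {m : ℕ} (h : HB n α K f) (hm : m ≤ n) : HB m α K f :=
  ⟨h.cd.of_le (by exact_mod_cast hm), fun i hi => h.bd i (hi.trans hm), fun i hi => h.ho i (hi.trans hm)⟩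

lemma cda {i : ℕ} (hf : ContDiff ℝ n f) (hi : i ≤ n) (x : V3) : ContDiffAt ℝ i f x :=
  (hf.of_le (by exact_mod_cast hi)).contDiffAt

lemma HB.add (hf : HB n α K f) (hg : HB n α K' g) : HB n α (K + K') (fun x => f x + g x) := by
  have e : ∀ i ≤ n, ∀ x, iteratedFDeriv ℝ i (fun x => f x + g x) x
      = iteratedFDeriv ℝ i f x + iteratedFDeriv ℝ i g x := fun i hi x =>
    iteratedFDeriv_add_apply (cda hf.cd hi x) (cda hg.cd hi x)
  refine ⟨hf.cd.add hg.cd, fun i hi x => ?_, fun i hi x y => ?_⟩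
  · rw [e i hi]
    exact (norm_add_le _ _).trans (add_le_add (hf.bd i hi x) (hg.bd i hi x))
  · rw [e i hi, e i hi, add_sub_add_comm, add_mul]
    exact (norm_add_le _ _).trans (add_le_add (hf.ho i hi x y) (hg.ho i hi x y))

lemma HB.clm (hf : HB n α K f) (T : E →L[ℝ] G) : HB n α (‖T‖ * K) (fun x => T (f x)) := by
  have e : ∀ i ≤ n, ∀ x, iteratedFDeriv ℝ i (fun x => T (f x)) x
      = T.compContinuousMultilinearMap (iteratedFDeriv ℝ i f x) := fun i hi x =>
    T.iteratedFDeriv_comp_left (hf.cd.contDiffAt) (by exact_mod_cast hi)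
  refine ⟨T.contDiff.comp hf.cd, fun i hi x => ?_, fun i hi x y => ?_⟩
  · rw [e i hi]
    exact (T.norm_compContinuousMultilinearMap_le _).trans
      (mul_le_mul_of_nonneg_left (hf.bd i hi x) (norm_nonneg _))
  · rw [e i hi, e i hi]
    have : T.compContinuousMultilinearMap (iteratedFDeriv ℝ i f x)
      - T.compContinuousMultilinearMap (iteratedFDeriv ℝ i f y)
      = T.compContinuousMultilinearMap (iteratedFDeriv ℝ i f x - iteratedFDeriv ℝ i f y) := by
      ext m; simp
    rw [this, mul_assoc]
    exact (T.norm_compContinuousMultilinearMap_le _).trans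
      (mul_le_mul_of_nonneg_left (hf.ho i hi x y) (norm_nonneg _))

lemma HB.neg (hf : HB n α K f) : HB n α K (fun x => - f x) := by
  have e : ∀ i, ∀ x, iteratedFDeriv ℝ i (fun x => - f x) x
      = - iteratedFDeriv ℝ i f x := fun i x => by
    rw [← iteratedFDeriv_neg_apply]; rfl
  refine ⟨hf.cd.neg, fun i hi x => ?_, fun i hi x y => ?_⟩
  · rw [e, norm_neg]; exact hf.bd i hi x
  · rw [e, e, ← norm_neg, neg_sub_neg, neg_sub]; exact hf.ho i hi x y

lemma HB.sub (hf : HB n α K f) (hg : HB n α K' g) : HB n α (K + K') (fun x => f x - g x) := by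
  simpa only [sub_eq_add_neg] using hf.add hg.neg

lemma mul_bd {p q : V3 → ℝ} (hp : ContDiff ℝ n p) (hq : ContDiff ℝ n q) {a b : ℝ} {x : V3}
    (ha : ∀ i ≤ n, ‖iteratedFDeriv ℝ i p x‖ ≤ a) (hb : ∀ i ≤ n, ‖iteratedFDeriv ℝ i q x‖ ≤ b) :
    ‖iteratedFDeriv ℝ n (fun y => p y * q y) x‖ ≤ 2 ^ n * (a * b) := by
  refine (norm_iteratedFDeriv_mul_le (N := n) hp hq x le_rfl).trans ?_
  have ha0 : 0 ≤ a := (norm_nonneg _).trans (ha 0 (Nat.zero_le _))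
  have : ∀ i ∈ Finset.range (n+1), (n.choose i : ℝ) * ‖iteratedFDeriv ℝ i p x‖ * ‖iteratedFDeriv ℝ (n - i) q x‖
      ≤ (n.choose i : ℝ) * (a * b) := by
    intro i hi
    rw [Finset.mem_range] at hi
    rw [mul_assoc]
    refine mul_le_mul_of_nonneg_left ?_ (by positivity)
    exact mul_le_mul (ha i (by omega)) (hb _ (by omega)) (norm_nonneg _) ha0
  refine (Finset.sum_le_sum this).trans ?_
  rw [← Finset.sum_mul]
  have h2 : ∑ i ∈ Finset.range (n+1), (n.choose i : ℝ) = 2 ^ n := by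
    exact_mod_cast Nat.sum_range_choose n
  rw [h2]

lemma HB.mul {p q : V3 → ℝ} (hp : HB n α K p) (hq : HB n α K' q) :
    HB n α (2 * 2 ^ n * (K * K')) (fun x => p x * q x) := by
  have hK := hp.nonneg
  have hK' := hq.nonneg
  have hpow : ∀ i ≤ n, (2:ℝ) ^ i ≤ 2 ^ n := fun i hi => pow_le_pow_right₀ (by norm_num) hi
  refine ⟨hp.cd.mul hq.cd, fun i hi x => ?_, fun i hi x y => ?_⟩
  · have h := mul_bd (x := x) (hp.of_le hi).cd (hq.of_le hi).cd (fun j hj => (hp.of_le hi).bd j hj x)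
      (fun j hj => (hq.of_le hi).bd j hj x)
    refine h.trans ?_
    refine mul_le_mul_of_nonneg_right ?_ (by positivity)
    have := hpow i hi
    have : (0:ℝ) ≤ 2 ^ n := by positivity
    linarith
  · have hp' := hp.of_le hi
    have hq' := hq.of_le hi
    set h := x - y with hh
    have hx : x = y + h := by simp [hh]
    have hadd : ContDiff ℝ i (fun z : V3 => z + h) := contDiff_id.add contDiff_const
    have cp : ContDiff ℝ i (fun z => p (z + h)) := hp'.cd.comp hadd
    have cq : ContDiff ℝ i (fun z => q (z + h)) := hq'.cd.comp hadd
    have cpd : ContDiff ℝ i (fun z => p (z + h) - p z) := cp.sub hp'.cd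
    have cqd : ContDiff ℝ i (fun z => q (z + h) - q z) := cq.sub hq'.cd
    have e1 : iteratedFDeriv ℝ i (fun z => p z * q z) x - iteratedFDeriv ℝ i (fun z => p z * q z) y
      = iteratedFDeriv ℝ i (fun z => (p (z + h) - p z) * q (z + h)) y
        + iteratedFDeriv ℝ i (fun z => p z * (q (z + h) - q z)) y := by
      have a1 : iteratedFDeriv ℝ i (fun z => p z * q z) x
          = iteratedFDeriv ℝ i (fun z => p (z + h) * q (z + h)) y := by
        rw [hx, ← iteratedFDeriv_comp_add_right (f := fun z => p z * q z)]
      rw [a1, ← iteratedFDeriv_add_apply ((cpd.mul cq).contDiffAt) ((hp'.cd.mul cqd).contDiffAt),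
        sub_eq_iff_eq_add, ← iteratedFDeriv_add_apply
        (f := (fun x => (p (x + h) - p x) * q (x + h)) + fun x => p x * (q (x + h) - q x))
        ((cpd.mul cq).add (hp'.cd.mul cqd)).contDiffAt ((hp'.cd.mul hq'.cd).contDiffAt)]
      congr 1
      funext z
      simp only [Pi.add_apply]; ring
    have dif : ∀ (s : V3 → ℝ) (j : ℕ), ContDiff ℝ j s → iteratedFDeriv ℝ j (fun z => s (z + h) - s z) y
        = iteratedFDeriv ℝ j s x - iteratedFDeriv ℝ j s y := by
      intro s j hs
      have hadd : ContDiff ℝ j (fun z : V3 => z + h) := contDiff_id.add contDiff_const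
      have := iteratedFDeriv_sub_apply (x := y) (hs.comp hadd).contDiffAt (hs.contDiffAt)
      rw [show (fun z => s (z + h) - s z) = (s ∘ fun z => z + h) - s from rfl, this]
      rw [hx, ← iteratedFDeriv_comp_add_right (f := s)]
      rfl
    rw [e1]
    have b1 := mul_bd (x := y) cpd cq (a := K * ‖h‖ ^ α) (b := K')
      (fun j hj => by
        rw [dif p j (hp'.of_le hj).cd]; exact hp'.ho j hj x y)
      (fun j hj => by
        rw [iteratedFDeriv_comp_add_right]; exact hq'.bd j hj _)
    have b2 := mul_bd (x := y) hp'.cd cqd (a := K) (b := K' * ‖h‖ ^ α)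
      (fun j hj => hp'.bd j hj _)
      (fun j hj => by
        rw [dif q j (hq'.of_le hj).cd]; exact hq'.ho j hj x y)
    refine (norm_add_le _ _).trans ((add_le_add b1 b2).trans ?_)
    have := hpow i hi
    calc _ = 2 ^ i * (2 * (K * K' * ‖h‖ ^ α)) := by ring
      _ ≤ 2 ^ n * (2 * (K * K' * ‖h‖ ^ α)) := mul_le_mul_of_nonneg_right this (by positivity)
      _ = _ := by ring

lemma interp_hol {α : ℝ} (hα : α ∈ Ioo (0:ℝ) 1) {H : ℝ} (hb : ∀ x, ‖f x‖ ≤ H)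
    (hl : ∀ x y, ‖f x - f y‖ ≤ H * ‖x - y‖) (x y : V3) : ‖f x - f y‖ ≤ 2 * H * ‖x - y‖ ^ α := by
  have hH : 0 ≤ H := (norm_nonneg _).trans (hb 0)
  rcases le_total ‖x - y‖ 1 with h | h
  · have h1 : ‖x - y‖ ≤ ‖x - y‖ ^ α := by
      have := Real.rpow_le_rpow_of_exponent_ge' (norm_nonneg (x - y)) h hα.1.le hα.2.le
      rwa [Real.rpow_one] at this
    have := hl x y
    have := mul_le_mul_of_nonneg_left h1 hH
    have : 0 ≤ H * ‖x - y‖ ^ α := by positivity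
    linarith
  · have h1 : 1 ≤ ‖x - y‖ ^ α := Real.one_le_rpow h hα.1.le
    have := norm_sub_le (f x) (f y)
    have := hb x; have := hb y
    nlinarith

lemma per_iter {f : V3 → E} (hp : Per f) (i : ℕ) : Per (fun x => iteratedFDeriv ℝ i f x) := by
  intro x k
  have : f = fun y => f (y + fun i => (k i : ℝ)) := by
    funext y; exact (hp y k).symm
  show _ = iteratedFDeriv ℝ i f x
  conv_rhs => rw [this]
  rw [iteratedFDeriv_comp_add_right]

lemma supN_nonneg (f : V3 → E) : 0 ≤ supN f := by
  apply Real.sSup_nonneg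
  rintro _ ⟨x, rfl⟩; exact norm_nonneg _

lemma hSemi_nonneg (α : ℝ) (f : V3 → E) : 0 ≤ hSemi α f := by
  apply Real.sSup_nonneg
  rintro _ ⟨x, y, _, rfl⟩; positivity

lemma cNorm_nonneg (l : ℕ) (f : V3 → E) : 0 ≤ cNorm l f :=
  Finset.sum_nonneg fun _ _ => supN_nonneg _

lemma holNorm_nonneg (l : ℕ) (α : ℝ) (f : V3 → E) : 0 ≤ holNorm l α f :=
  add_nonneg (cNorm_nonneg _ _) (hSemi_nonneg _ _)

lemma HB.of_mem {α : ℝ} (hα : α ∈ Ioo (0:ℝ) 1) (hf : MemHol n α f) (hp : Per f) :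
    HB n α (2 * holNorm n α f) f := by
  obtain ⟨hcd, C, hC⟩ := hf
  have hH := holNorm_nonneg n α f
  have bd : ∀ i ≤ n, ∀ x, ‖iteratedFDeriv ℝ i f x‖ ≤ holNorm n α f := by
    intro i hi x
    obtain ⟨M, _, hM⟩ := per_bdd (per_iter hp i) (hcd.continuous_iteratedFDeriv (by exact_mod_cast hi))
    have h1 : ‖iteratedFDeriv ℝ i f x‖ ≤ supN (fun x => iteratedFDeriv ℝ i f x) := by
      apply le_csSup
      · refine ⟨M, ?_⟩
        rintro _ ⟨x, rfl⟩; exact hM x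
      · exact ⟨x, rfl⟩
    have h2 : supN (fun x => iteratedFDeriv ℝ i f x) ≤ cNorm n f :=
      Finset.single_le_sum (f := fun m => supN (fun x => iteratedFDeriv ℝ m f x))
        (fun _ _ => supN_nonneg _) (Finset.mem_range.2 (by omega))
    have := hSemi_nonneg α (fun x => iteratedFDeriv ℝ n f x)
    unfold holNorm
    linarith
  refine ⟨hcd, fun i hi x => (bd i hi x).trans (by linarith), fun i hi x y => ?_⟩
  rcases eq_or_lt_of_le hi with rfl | hlt
  · rcases eq_or_ne x y with rfl | hxy
    · simp [Real.zero_rpow hα.1.ne']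
    have hpos : 0 < ‖x - y‖ := norm_pos_iff.2 (sub_ne_zero.2 hxy)
    have hpa : 0 < ‖x - y‖ ^ α := Real.rpow_pos_of_pos hpos _
    have h1 : ‖iteratedFDeriv ℝ i f x - iteratedFDeriv ℝ i f y‖ / ‖x - y‖ ^ α
        ≤ hSemi α (fun x => iteratedFDeriv ℝ i f x) := by
      apply le_csSup
      · refine ⟨C, ?_⟩
        rintro _ ⟨a, b, hab, rfl⟩
        have : 0 < ‖a - b‖ := norm_pos_iff.2 (sub_ne_zero.2 hab)
        rw [div_le_iff₀ (Real.rpow_pos_of_pos this _)]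
        exact hC a b
      · exact ⟨x, y, hxy, rfl⟩
    rw [div_le_iff₀ hpa] at h1
    refine h1.trans (mul_le_mul_of_nonneg_right ?_ hpa.le)
    have := cNorm_nonneg i f
    have := hSemi_nonneg α (fun x => iteratedFDeriv ℝ i f x)
    unfold holNorm
    linarith
  · refine interp_hol hα (bd i hi) (fun x y => ?_) x y
    refine Convex.norm_image_sub_le_of_norm_fderiv_le (𝕜 := ℝ) (s := univ) (f := iteratedFDeriv ℝ i f)
      (fun z _ => ?_) (fun z _ => ?_) convex_univ (mem_univ _) (mem_univ _)
    · exact hcd.differentiable_iteratedFDeriv (by exact_mod_cast hlt) z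
    · rw [norm_fderiv_iteratedFDeriv]
      exact bd (i+1) hlt z

lemma HB.holNorm_le (hf : HB n α K f) : holNorm n α f ≤ (n + 2) * K := by
  have hK := hf.nonneg
  have h1 : cNorm n f ≤ ∑ m ∈ Finset.range (n+1), K := by
    refine Finset.sum_le_sum fun i hi => ?_
    rw [Finset.mem_range] at hi
    apply csSup_le (range_nonempty _)
    rintro _ ⟨x, rfl⟩
    exact hf.bd i (by omega) x
  have h2 : hSemi α (fun x => iteratedFDeriv ℝ n f x) ≤ K := by
    apply Real.sSup_le _ hK
    rintro _ ⟨a, b, hab, rfl⟩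
    have : 0 < ‖a - b‖ := norm_pos_iff.2 (sub_ne_zero.2 hab)
    rw [div_le_iff₀ (Real.rpow_pos_of_pos this _)]
    exact hf.ho n le_rfl a b
  simp at h1
  unfold holNorm
  linarith

end hb


lemma dir_hasDerivAt {E : Type} [NormedAddCommGroup E] [NormedSpace ℝ E] {u : V3 → E}
    (hu : Differentiable ℝ u) (x : V3) (j : Fin 3) (s : ℝ) :
    HasDerivAt (fun s : ℝ => u (x + s • e3 j)) (dk j u (x + s • e3 j)) s := by
  have h1 : HasFDerivAt u (fderiv ℝ u (x + s • e3 j)) (x + s • e3 j) := (hu _).hasFDerivAt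
  have h2 : HasDerivAt (fun s : ℝ => x + s • e3 j) (e3 j) s := by
    simpa using ((hasDerivAt_id s).smul_const (e3 j)).const_add x
  exact h1.comp_hasDerivAt s h2

lemma per_e3 {E : Type} {u : V3 → E} (hp : Per u) (x : V3) (j : Fin 3) : u (x + e3 j) = u x := by
  have := hp x (Pi.single j 1)
  rw [← this]
  congr 2
  ext i
  by_cases h : i = j
  · subst h; simp [e3]
  · simp [e3, h]

lemma per_sup {E : Type} [NormedAddCommGroup E] [NormedSpace ℝ E] {u : V3 → E}
    (hu : Differentiable ℝ u) (hp : Per u) (j : Fin 3) (c : V3 → E) {B : ℝ}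
    (hB : ∀ x, ∀ s ∈ Ico (0:ℝ) 1, ‖dk j u (x + s • e3 j) - c x‖ ≤ B) (x : V3) : ‖c x‖ ≤ B := by
  have h := norm_image_sub_le_of_norm_deriv_le_segment_01'
    (f := fun s : ℝ => u (x + s • e3 j) - s • c x)
    (f' := fun s => dk j u (x + s • e3 j) - c x) (C := B) ?_ (hB x)
  · simpa [per_e3 hp] using h
  · intro s _
    have := (dir_hasDerivAt hu x j s).sub ((hasDerivAt_id s).smul_const (c x))
    simp only [one_smul] at this
    exact this.hasDerivWithinAt

theorem schauder {α : ℝ} (hα : α ∈ Ioo (0:ℝ) 1) : ∃ C, 0 ≤ C ∧ ∀ (m : ℕ)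
    (E : Type) [NormedAddCommGroup E] [NormedSpace ℝ E] [CompleteSpace E]
    (u : V3 → E) (F : Fin 3 → V3 → E) (K : ℝ), ContDiff ℝ ∞ u → Per u →
    (∀ k, ContDiff ℝ ∞ (F k)) → (∀ k, Per (F k)) →
    (∀ x, ∑ k, dk k (dk k u) x = ∑ k, dk k (F k) x) →
    (∀ k, HB m α K (F k)) → HB m α (C * K) (fderiv ℝ u) := by
  obtain ⟨C, hC, hcore⟩ := core_holder hα
  refine ⟨3 * C, by positivity, fun m => ?_⟩
  have base : ∀ (E : Type) [NormedAddCommGroup E] [NormedSpace ℝ E] [CompleteSpace E]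
    (u : V3 → E) (F : Fin 3 → V3 → E) (K : ℝ), ContDiff ℝ ∞ u → Per u →
    (∀ k, ContDiff ℝ ∞ (F k)) → (∀ k, Per (F k)) →
    (∀ x, ∑ k, dk k (dk k u) x = ∑ k, dk k (F k) x) →
    (∀ k, HB 0 α K (F k)) → HB 0 α (3 * C * K) (fderiv ℝ u) := by
    intro E _ _ _ u F K hu hpu hF hpF heq hFK
    have hK := (hFK 0).nonneg
    have h := hcore E u F K hu hpu hF hpF heq hK (fun k => (HB.zero_iff.1 (hFK k)).2.2)
    rw [HB.zero_iff]
    refine ⟨(smooth_fderiv hu).continuous, fun x => ?_, fun x y => ?_⟩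
    · rw [mul_assoc]
      apply clm_norm_le
      intro j
      refine per_sup (hu.differentiable (by simp)) hpu j (dk j u) (B := C * K) ?_ x
      intro x s hs
      refine (h j _ _).trans ?_
      have : ‖x + s • e3 j - x‖ = s := by
        rw [add_sub_cancel_left, norm_smul, e3_norm, mul_one, Real.norm_eq_abs, abs_of_nonneg hs.1]
      rw [this]
      have : s ^ α ≤ 1 := Real.rpow_le_one hs.1 hs.2.le hα.1.le
      exact mul_le_of_le_one_right (by positivity) this
    · have := clm_norm_le (fderiv ℝ u x - fderiv ℝ u y) (C * K * ‖x - y‖ ^ α)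
        (fun j => h j x y)
      linarith
  induction m with
  | zero => exact base
  | succ m ih =>
    intro E _ _ _ u F K hu hpu hF hpF heq hFK
    rw [HB.succ_iff]
    refine ⟨(smooth_fderiv hu).differentiable (by simp),
      base E u F K hu hpu hF hpF heq (fun k => (hFK k).of_le (Nat.zero_le _)), ?_⟩
    refine ih (V3 →L[ℝ] E) (fderiv ℝ u) (fun k => fderiv ℝ (F k)) K (smooth_fderiv hu) (per_fderiv hpu)
      (fun k => smooth_fderiv (hF k)) (fun k => per_fderiv (hpF k)) ?_
      (fun k => (HB.succ_iff.1 (hFK k)).2.2)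
    intro x
    have h1 : ∀ k, dk k (dk k (fderiv ℝ u)) x = fderiv ℝ (dk k (dk k u)) x := by
      intro k
      rw [← fderiv_dk hu k, ← fderiv_dk (smooth_dk hu k) k]
    have h2 : ∀ k, dk k (fderiv ℝ (F k)) x = fderiv ℝ (dk k (F k)) x := by
      intro k
      rw [← fderiv_dk (hF k) k]
    simp_rw [h1, h2]
    rw [← fderiv_fun_sum, ← fderiv_fun_sum]
    · congr 1
      funext x; exact heq x
    · exact fun k _ => (smooth_dk (hF k) k).differentiable (by simp) x
    · exact fun k _ => (smooth_dk (smooth_dk hu k) k).differentiable (by simp) x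

lemma taylor_hol {E : Type} [NormedAddCommGroup E] [NormedSpace ℝ E] {α K : ℝ} (hα : 0 < α)
    {f : V3 → E} (hf : Differentiable ℝ f)
    (hK : ∀ x y, ‖fderiv ℝ f x - fderiv ℝ f y‖ ≤ K * ‖x - y‖ ^ α) (hK0 : 0 ≤ K) (x h : V3) :
    ‖f (x + h) - f x - fderiv ℝ f x h‖ ≤ K * ‖h‖ ^ α * ‖h‖ := by
  have := Convex.norm_image_sub_le_of_norm_hasFDerivWithin_le' (𝕜 := ℝ) (f := f) (f' := fderiv ℝ f)
    (φ := fderiv ℝ f x) (C := K * ‖h‖ ^ α) (s := Metric.closedBall x ‖h‖) (x := x) (y := x + h)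
    (fun y _ => (hf y).hasFDerivAt.hasFDerivWithinAt) ?_ (convex_closedBall _ _)
    (Metric.mem_closedBall_self (norm_nonneg _)) (by simp)
  · simpa using this
  · intro y hy
    refine (hK y x).trans ?_
    rw [mem_closedBall_iff_norm] at hy
    gcongr

theorem HB_limit {α K : ℝ} (hα : 0 < α) (n : ℕ) : ∀ (E : Type) [NormedAddCommGroup E] [NormedSpace ℝ E]
    [CompleteSpace E] (f : ℕ → V3 → E) (g : V3 → E), (∀ N, HB n α K (f N)) →
    TendstoUniformly f g atTop → HB n α K g := by
  have base : ∀ (E : Type) [NormedAddCommGroup E] [NormedSpace ℝ E]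
    (f : ℕ → V3 → E) (g : V3 → E), (∀ N, HB 0 α K (f N)) →
    TendstoUniformly f g atTop → HB 0 α K g := by
    intro E _ _ f g hf hfg
    have h := fun N => HB.zero_iff.1 (hf N)
    rw [HB.zero_iff]
    refine ⟨hfg.continuous (Frequently.of_forall fun N => (h N).1), fun x => ?_, fun x y => ?_⟩
    · exact le_of_tendsto (hfg.tendsto_at x).norm (Eventually.of_forall fun N => (h N).2.1 x)
    · exact le_of_tendsto ((hfg.tendsto_at x).sub (hfg.tendsto_at y)).norm
        (Eventually.of_forall fun N => (h N).2.2 x y)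
  induction n with
  | zero => exact fun E _ _ _ => base E
  | succ n ih =>
    intro E _ _ _ f g hf hfg
    have hs := fun N => HB.succ_iff.1 (hf N)
    have hK0 := (hf 0).nonneg
    have hb : HB 0 α K g := base E f g (fun N => (hs N).2.1) hfg
    have hho : ∀ N x y, ‖fderiv ℝ (f N) x - fderiv ℝ (f N) y‖ ≤ K * ‖x - y‖ ^ α := fun N =>
      (HB.zero_iff.1 ((hs N).2.2.of_le (Nat.zero_le _))).2.2
    have hcau : UniformCauchySeqOn (fun N => fderiv ℝ (f N)) atTop univ := by
      rw [Metric.uniformCauchySeqOn_iff]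
      intro ε hε
      -- choose the step
      obtain ⟨t, ht0, ht⟩ : ∃ t > 0, 2 * K * t ^ α < ε / 12 := by
        have hlim : Tendsto (fun t : ℝ => 2 * K * t ^ α) (𝓝[>] 0) (𝓝 (2 * K * 0)) := by
          have h0 : ContinuousAt (fun t : ℝ => t ^ α) 0 :=
            Real.continuousAt_rpow_const _ _ (Or.inr hα.le)
          have := h0.tendsto
          rw [Real.zero_rpow hα.ne'] at this
          exact (this.mono_left nhdsWithin_le_nhds).const_mul _
        rw [mul_zero] at hlim
        have h1 := hlim.eventually (gt_mem_nhds (show 0 < ε / 12 by positivity))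
        obtain ⟨t, h2, h3⟩ := (h1.and self_mem_nhdsWithin).exists
        exact ⟨t, h3, h2⟩
      have hu := Metric.tendstoUniformly_iff.1 hfg (ε * t / 48) (by positivity)
      obtain ⟨N, hN⟩ := eventually_atTop.1 hu
      refine ⟨N, fun m hm k hk x _ => ?_⟩
      rw [dist_eq_norm]
      have hdiff : ∀ z, ‖f m z - f k z‖ ≤ ε * t / 24 := by
        intro z
        have h1 := hN m hm z
        have h2 := hN k hk z
        have := dist_triangle_left (f m z) (f k z) (g z)
        rw [← dist_eq_norm]; linarith
      have hj : ∀ j, ‖(fderiv ℝ (f m) x - fderiv ℝ (f k) x) (e3 j)‖ ≤ ε / 6 := by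
        intro j
        have hn : ‖t • e3 j‖ = t := by
          rw [norm_smul, e3_norm, mul_one, Real.norm_eq_abs, abs_of_pos ht0]
        have t1 := taylor_hol hα (hs m).1 (hho m) hK0 x (t • e3 j)
        have t2 := taylor_hol hα (hs k).1 (hho k) hK0 x (t • e3 j)
        rw [hn] at t1 t2
        have d1 := hdiff x
        have d2 := hdiff (x + t • e3 j)
        have e : t • (fderiv ℝ (f m) x - fderiv ℝ (f k) x) (e3 j)
          = -(f m (x + t • e3 j) - f m x - fderiv ℝ (f m) x (t • e3 j))
            + (f k (x + t • e3 j) - f k x - fderiv ℝ (f k) x (t • e3 j))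
            + (f m (x + t • e3 j) - f k (x + t • e3 j)) - (f m x - f k x) := by
          rw [map_smul, map_smul, sub_apply, smul_sub]; abel
        have e2 : ‖t • (fderiv ℝ (f m) x - fderiv ℝ (f k) x) (e3 j)‖
            ≤ K * t ^ α * t + K * t ^ α * t + ε * t / 24 + ε * t / 24 := by
          rw [e]
          refine (norm_sub_le _ _).trans (add_le_add ?_ d1)
          refine (norm_add_le _ _).trans (add_le_add ?_ d2)
          refine (norm_add_le _ _).trans (add_le_add ?_ t2)
          rw [norm_neg]; exact t1
        rw [norm_smul, Real.norm_eq_abs, abs_of_pos ht0] at e2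
        have e3' : t * ‖(fderiv ℝ (f m) x - fderiv ℝ (f k) x) (e3 j)‖ ≤ t * (ε / 6) := by
          have := mul_lt_mul_of_pos_left ht ht0
          linarith
        exact le_of_mul_le_mul_left e3' ht0
      have := clm_norm_le _ _ hj
      linarith
    have hpt : ∀ x, ∃ T, Tendsto (fun N => fderiv ℝ (f N) x) atTop (𝓝 T) := by
      intro x
      exact cauchySeq_tendsto_of_complete (hcau.cauchySeq (mem_univ x))
    choose g' hg' using hpt
    have hunif : TendstoUniformly (fun N => fderiv ℝ (f N)) g' atTop := by
      rw [← tendstoUniformlyOn_univ]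
      exact hcau.tendstoUniformlyOn_of_tendsto fun x _ => hg' x
    have hder : ∀ x, HasFDerivAt g (g' x) x := fun x =>
      hasFDerivAt_of_tendstoUniformly hunif
        (fun N y => ((hs N).1 y).hasFDerivAt) (fun y => hfg.tendsto_at y) x
    have hfd : fderiv ℝ g = g' := funext fun x => (hder x).fderiv
    rw [HB.succ_iff]
    refine ⟨fun x => (hder x).differentiableAt, hb, ?_⟩
    rw [hfd]
    exact ih (V3 →L[ℝ] E) _ _ (fun N => (hs N).2.2) hunif


section moll
variable {E : Type} [NormedAddCommGroup E] [NormedSpace ℝ E] [CompleteSpace E]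

def mollB (N : ℕ) : ContDiffBump (0:V3) :=
  ⟨1 / (2 * ((N:ℝ) + 1)), 1 / ((N:ℝ) + 1), by positivity, by
    have h0 : (0:ℝ) ≤ N := Nat.cast_nonneg N
    apply one_div_lt_one_div_of_lt
    · positivity
    · linarith⟩

def eta (N : ℕ) : V3 → ℝ := (mollB N).normed volume

lemma eta_smooth (N : ℕ) : ContDiff ℝ ∞ (eta N) := (mollB N).contDiff_normed
lemma eta_hcs (N : ℕ) : HasCompactSupport (eta N) := (mollB N).hasCompactSupport_normed
lemma eta_cont (N : ℕ) : Continuous (eta N) := (eta_smooth N).continuous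
lemma eta_abs (N : ℕ) : ∫ z, |eta N z| = 1 := by
  have : ∀ z, |eta N z| = eta N z := fun z => abs_of_nonneg ((mollB N).nonneg_normed z)
  simp_rw [this]
  exact (mollB N).integral_normed
lemma rOut_tendsto : Tendsto (fun N => (mollB N).rOut) atTop (𝓝 0) :=
  tendsto_one_div_add_atTop_nhds_zero_nat

def MN (N : ℕ) (f : V3 → E) : V3 → E := Av (eta N) 1 f

open scoped Convolution in
lemma MN_eq (N : ℕ) (f : V3 → E) :
    MN N f = ((mollB N).normed volume ⋆[ContinuousLinearMap.lsmul ℝ ℝ, volume] f) := by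
  funext x
  simp [MN, Av, convolution, eta]

lemma MN_smooth (N : ℕ) {f : V3 → E} (hf : Continuous f) : ContDiff ℝ ∞ (MN N f) := by
  rw [MN_eq]
  exact (mollB N).hasCompactSupport_normed.contDiff_convolution_left _ (mollB N).contDiff_normed
    hf.locallyIntegrable

lemma MN_per (N : ℕ) {f : V3 → E} (hf : Per f) : Per (MN N f) := by
  intro x k
  simp only [MN, Av]
  congr 1
  funext z
  rw [← hf (x - (1:ℝ) • z) k]
  congr 2
  abel

lemma MN_fderiv (N : ℕ) {f : V3 → E} (hf : ContDiff ℝ 1 f) (hp : Per f) :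
    fderiv ℝ (MN N f) = MN N (fderiv ℝ f) := by
  funext x
  exact (Av_hasFDerivAt (eta_cont N) (eta_hcs N) 1 hf hp x).fderiv

lemma MN_clm {F : Type} [NormedAddCommGroup F] [NormedSpace ℝ F] [CompleteSpace F]
    (N : ℕ) {f : V3 → E} (hf : Continuous f) (T : E →L[ℝ] F) :
    MN N (fun x => T (f x)) = fun x => T (MN N f x) := by
  funext x
  simp only [MN, Av]
  rw [← ContinuousLinearMap.integral_comp_comm T (Av_integrable (eta_cont N) (eta_hcs N) 1 hf x)]
  simp

lemma MN_dk (N : ℕ) {f : V3 → E} (hf : ContDiff ℝ 1 f) (hp : Per f) (k : Fin 3) :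
    dk k (MN N f) = MN N (dk k f) := by
  have h := MN_clm N (hf.continuous_fderiv (by simp)) (ContinuousLinearMap.apply ℝ E (e3 k))
  simp only [ContinuousLinearMap.apply_apply] at h
  show (fun x => fderiv ℝ (MN N f) x (e3 k)) = MN N (fun x => fderiv ℝ f x (e3 k))
  rw [h, MN_fderiv N hf hp]

lemma MN_add (N : ℕ) {f g : V3 → E} (hf : Continuous f) (hg : Continuous g) :
    MN N (fun x => f x + g x) = fun x => MN N f x + MN N g x := by
  funext x
  simp only [MN, Av, smul_add]
  exact integral_add (Av_integrable (eta_cont N) (eta_hcs N) 1 hf x)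
    (Av_integrable (eta_cont N) (eta_hcs N) 1 hg x)

lemma MN_sub (N : ℕ) {f g : V3 → E} (hf : Continuous f) (hg : Continuous g) :
    MN N (fun x => f x - g x) = fun x => MN N f x - MN N g x := by
  funext x
  simp only [MN, Av, smul_sub]
  exact integral_sub (Av_integrable (eta_cont N) (eta_hcs N) 1 hf x)
    (Av_integrable (eta_cont N) (eta_hcs N) 1 hg x)

lemma MN_norm_le (N : ℕ) {f : V3 → E} {M : ℝ} (hM : ∀ x, ‖f x‖ ≤ M) (x : V3) : ‖MN N f x‖ ≤ M := by
  have := Av_norm_le (eta_cont N) (eta_hcs N) 1 hM x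
  rwa [eta_abs, one_mul] at this

lemma MN_diff_le (N : ℕ) {f : V3 → E} (hf : Continuous f) {M : ℝ} (x y : V3)
    (hM : ∀ z, ‖f (x - z) - f (y - z)‖ ≤ M) : ‖MN N f x - MN N f y‖ ≤ M := by
  have h := MN_norm_le N (f := fun z => f (x + z) - f (y + z)) (M := M)
    (fun z => by simpa using hM (-z)) 0
  rw [MN_sub N (by fun_prop) (by fun_prop)] at h
  simpa [MN, Av, sub_eq_add_neg] using h

lemma MN_HB {α : ℝ} (n : ℕ) : ∀ (E : Type) [NormedAddCommGroup E] [NormedSpace ℝ E] [CompleteSpace E]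
    (f : V3 → E) (K : ℝ) (N : ℕ), HB n α K f → Per f → HB n α K (MN N f) := by
  have base : ∀ (E : Type) [NormedAddCommGroup E] [NormedSpace ℝ E] [CompleteSpace E]
    (f : V3 → E) (K : ℝ) (N : ℕ), HB 0 α K f → HB 0 α K (MN N f) := by
    intro E _ _ _ f K N h
    rw [HB.zero_iff] at h ⊢
    refine ⟨(MN_smooth N h.1).continuous, MN_norm_le N h.2.1, fun x y => MN_diff_le N h.1 x y fun z => ?_⟩
    simpa using h.2.2 (x - z) (y - z)
  induction n with
  | zero => exact fun E _ _ _ f K N h _ => base E f K N h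
  | succ n ih =>
    intro E _ _ _ f K N h hp
    have hcd : ContDiff ℝ 1 f := h.cd.of_le (by simp)
    rw [HB.succ_iff] at h ⊢
    refine ⟨(MN_smooth N hcd.continuous).differentiable (by simp), base E f K N h.2.1, ?_⟩
    rw [MN_fderiv N hcd hp]
    exact ih _ _ K N h.2.2 (per_fderiv hp)

lemma MN_tendsto {f : V3 → E} (hf : Continuous f) (x : V3) :
    Tendsto (fun N => MN N f x) atTop (𝓝 (f x)) := by
  simp_rw [MN_eq]
  exact ContDiffBump.convolution_tendsto_right_of_continuous rOut_tendsto hf x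

lemma per_lip {f : V3 → E} (hf : ContDiff ℝ 1 f) (hp : Per f) :
    ∃ M, 0 ≤ M ∧ ∀ x y, ‖f x - f y‖ ≤ M * ‖x - y‖ := by
  obtain ⟨M, hM0, hM⟩ := per_bdd (per_fderiv hp) (hf.continuous_fderiv (by simp))
  refine ⟨M, hM0, fun x y => ?_⟩
  exact Convex.norm_image_sub_le_of_norm_fderiv_le (𝕜 := ℝ) (s := univ)
    (fun x _ => hf.differentiable (by simp) x) (fun x _ => hM x) convex_univ (mem_univ _) (mem_univ _)

lemma MN_unif {f : V3 → E} (hf : ContDiff ℝ 1 f) (hp : Per f) :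
    TendstoUniformly (fun N => MN N f) f atTop := by
  obtain ⟨M, hM0, hM⟩ := per_lip hf hp
  rw [Metric.tendstoUniformly_iff]
  intro ε hε
  have h1 : Tendsto (fun N => M * (mollB N).rOut) atTop (𝓝 0) := by
    simpa using rOut_tendsto.const_mul M
  filter_upwards [h1.eventually (gt_mem_nhds hε)] with N hN x
  rw [dist_comm, MN_eq]
  refine lt_of_le_of_lt ?_ hN
  refine (mollB N).dist_normed_convolution_le hf.continuous.aestronglyMeasurable fun y hy => ?_
  rw [dist_eq_norm]
  refine (hM y x).trans (mul_le_mul_of_nonneg_left ?_ hM0)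
  rw [← dist_eq_norm]
  exact (Metric.mem_ball.1 hy).le

end moll

section curl
/-- integration by parts for a compactly supported factor -/
lemma ibp {a b : V3 → ℝ} (ha : ContDiff ℝ 1 a) (hc : HasCompactSupport a) (hb : ContDiff ℝ 1 b)
    (k : Fin 3) : ∫ x, a x * dk k b x = - ∫ x, dk k a x * b x := by
  have hac := ha.continuous
  have hbc := hb.continuous
  have h1 := cont_dk ha k
  have h2 := cont_dk hb k
  refine integral_mul_fderiv_eq_neg_fderiv_mul_of_integrable (v := e3 k) ?_ ?_ ?_ ?_ ?_
  · exact (h1.mul hbc).integrable_of_hasCompactSupport ((hcs_dk hc k).mul_right)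
  · exact (hac.mul h2).integrable_of_hasCompactSupport (hc.mul_right)
  · exact (hac.mul hbc).integrable_of_hasCompactSupport (hc.mul_right)
  · exact fun x _ => ha.differentiable (by simp) x
  · exact fun x _ => hb.differentiable (by simp) x

lemma swap_smooth {a b : V3 → ℝ} (ha : ContDiff ℝ 1 a) (hc : HasCompactSupport a)
    (hb : ContDiff ℝ ∞ b) (k i : Fin 3) :
    ∫ x, dk k a x * dk i b x = ∫ x, dk i a x * dk k b x := by
  have h1 := ibp ha hc (smooth_one (smooth_dk hb i)) k
  have h2 := ibp ha hc (smooth_one (smooth_dk hb k)) i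
  rw [dk_comm hb k i] at h2
  linarith

lemma swap_lim {a b : V3 → ℝ} (ha : ContDiff ℝ 1 a) (hc : HasCompactSupport a)
    (hb : ContDiff ℝ 1 b) (hp : Per b) (k i : Fin 3) :
    Tendsto (fun N => ∫ x, dk k a x * dk i (MN N b) x) atTop (𝓝 (∫ x, dk k a x * dk i b x)) := by
  obtain ⟨M, hM0, hM⟩ := per_bdd (per_dk hp i) (cont_dk hb i)
  have hac := cont_dk ha k
  refine tendsto_integral_of_dominated_convergence (fun x => ‖dk k a x‖ * M) ?_ ?_ ?_ ?_
  · intro N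
    exact (hac.mul (cont_dk (smooth_one (MN_smooth N hb.continuous)) i)).aestronglyMeasurable
  · exact (hac.integrable_of_hasCompactSupport (hcs_dk hc k)).norm.mul_const M
  · intro N
    refine Eventually.of_forall fun x => ?_
    rw [norm_mul, MN_dk N hb hp]
    exact mul_le_mul_of_nonneg_left (MN_norm_le N hM x) (norm_nonneg _)
  · refine Eventually.of_forall fun x => ?_
    have := MN_tendsto (cont_dk hb i) x
    simp_rw [MN_dk _ hb hp]
    exact this.const_mul _

lemma swap {a b : V3 → ℝ} (ha : ContDiff ℝ 1 a) (hc : HasCompactSupport a)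
    (hb : ContDiff ℝ 1 b) (hp : Per b) (k i : Fin 3) :
    ∫ x, dk k a x * dk i b x = ∫ x, dk i a x * dk k b x := by
  refine tendsto_nhds_unique (swap_lim ha hc hb hp k i) ?_
  have := swap_lim ha hc hb hp i k
  refine this.congr fun N => ?_
  exact swap_smooth ha hc (MN_smooth N hb.continuous) i k
end curl


def cpt (j : Fin 3) (v : V3 → V3) : V3 → ℝ := fun y => v y j

def Zi (g : V3 → ℝ) : Prop := Integrable g ∧ ∫ x, g x = 0

lemma Zi.add {f g : V3 → ℝ} (hf : Zi f) (hg : Zi g) : Zi (fun x => f x + g x) :=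
  ⟨hf.1.add hg.1, by rw [integral_add hf.1 hg.1, hf.2, hg.2, add_zero]⟩
lemma Zi.sub {f g : V3 → ℝ} (hf : Zi f) (hg : Zi g) : Zi (fun x => f x - g x) :=
  ⟨hf.1.sub hg.1, by rw [integral_sub hf.1 hg.1, hf.2, hg.2, sub_zero]⟩
lemma Zi.sum {f : Fin 3 → V3 → ℝ} (hf : ∀ j, Zi (f j)) : Zi (fun x => ∑ j, f j x) :=
  ⟨integrable_finsetSum _ fun j _ => (hf j).1, by
    rw [integral_finsetSum _ fun j _ => (hf j).1]
    exact Finset.sum_eq_zero fun j _ => (hf j).2⟩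

lemma Zi.ibp {a b : V3 → ℝ} (ha : ContDiff ℝ 1 a) (hc : HasCompactSupport a) (hb : ContDiff ℝ 1 b)
    (k : Fin 3) : Zi (fun x => a x * dk k b x + dk k a x * b x) := by
  have h1 : Integrable (fun x => a x * dk k b x) :=
    (ha.continuous.mul (cont_dk hb k)).integrable_of_hasCompactSupport (hc.mul_right)
  have h2 : Integrable (fun x => dk k a x * b x) :=
    ((cont_dk ha k).mul hb.continuous).integrable_of_hasCompactSupport ((hcs_dk hc k).mul_right)
  refine ⟨h1.add h2, ?_⟩
  rw [integral_add h1 h2, _root_.ibp ha hc hb k]; ring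

lemma Zi.swap {a b : V3 → ℝ} (ha : ContDiff ℝ 1 a) (hc : HasCompactSupport a)
    (hb : ContDiff ℝ 1 b) (hp : Per b) (k i : Fin 3) :
    Zi (fun x => dk k a x * dk i b x - dk i a x * dk k b x) := by
  have h1 : ∀ k i, Integrable (fun x => dk k a x * dk i b x) := fun k i =>
    ((cont_dk ha k).mul (cont_dk hb i)).integrable_of_hasCompactSupport ((hcs_dk hc k).mul_right)
  refine ⟨(h1 k i).sub (h1 i k), ?_⟩
  rw [integral_sub (h1 k i) (h1 i k), _root_.swap ha hc hb hp k i, sub_self]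

def Om (l v : V3 → V3) (k i : Fin 3) (x : V3) : ℝ :=
  dk k (cpt i v) x - dk i (cpt k v) x
    + ∑ j, (dk i (cpt j l) x * dk k (cpt j v) x - dk k (cpt j l) x * dk i (cpt j v) x)

lemma cpt_cd {n : WithTop ℕ∞} {v : V3 → V3} (hv : ContDiff ℝ n v) (j : Fin 3) : ContDiff ℝ n (cpt j v) :=
  contDiff_pi.1 hv j

lemma cpt_per {v : V3 → V3} (hv : Per v) (j : Fin 3) : Per (cpt j v) := fun x k => by
  simp only [cpt]; rw [hv x k]

lemma weber_cmp (l v : V3 → V3) (i : Fin 3) (x : V3) :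
    weberField l v x i = cpt i v x + ∑ j, dk i (cpt j l) x * cpt j v x := rfl

lemma weber_cont {l v : V3 → V3} (hl : ContDiff ℝ 1 l) (hv : ContDiff ℝ 1 v) :
    Continuous (weberField l v) := by
  refine continuous_pi fun i => ?_
  simp_rw [weber_cmp]
  refine (cpt_cd hv i).continuous.add (continuous_finsetSum _ fun j _ => ?_)
  exact (cont_dk (cpt_cd hl j) i).mul (cpt_cd hv j).continuous

lemma p_C1 {f w : V3 → V3} {p : V3 → ℝ} (hf : Continuous f) (hw : Continuous w)
    (hp : Differentiable ℝ p) (h : ∀ x, f x = w x + gradf p x) : ContDiff ℝ 1 p := by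
  rw [contDiff_one_iff_fderiv]
  refine ⟨hp, ?_⟩
  have h1 : fderiv ℝ p = fun x => ∑ k, (f x k - w x k) • ContinuousLinearMap.proj (R := ℝ) (φ := fun _ : Fin 3 => ℝ) k := by
    funext x
    ext y
    conv_lhs => rw [v3_sum y]
    rw [map_sum]
    simp only [map_smul, smul_eq_mul, sum_apply, smul_apply,
      ContinuousLinearMap.proj_apply]
    refine Finset.sum_congr rfl fun k _ => ?_
    have := congrFun (h x) k
    have h3 : fderiv ℝ p x (e3 k) = gradf p x k := rfl
    rw [h3, this]
    simp [mul_comm]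
  rw [h1]
  fun_prop

theorem curl_id {l v w : V3 → V3} {p : V3 → ℝ} (hl : ContDiff ℝ 1 l) (hlp : Per l)
    (hv : ContDiff ℝ 1 v) (hw : ContDiff ℝ 1 w) (hp : ContDiff ℝ 1 p) (hpp : Per p)
    (h : ∀ x, weberField l v x = w x + gradf p x) (k i : Fin 3) (x : V3) :
    dk k (cpt i w) x - dk i (cpt k w) x = Om l v k i x := by
  have hD : Continuous (fun x => dk k (cpt i w) x - dk i (cpt k w) x - Om l v k i x) := by
    have h1 := fun a b => cont_dk (cpt_cd hl a) b
    have h2 := fun a b => cont_dk (cpt_cd hv a) b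
    have h3 := fun a b => cont_dk (cpt_cd hw a) b
    unfold Om
    refine ((h3 _ _).sub (h3 _ _)).sub (((h2 _ _).sub (h2 _ _)).add (continuous_finsetSum _ fun j _ => ?_))
    exact ((h1 _ _).mul (h2 _ _)).sub ((h1 _ _).mul (h2 _ _))
  have key := ae_eq_zero_of_integral_contDiff_smul_eq_zero (μ := (volume : Measure V3))
    hD.locallyIntegrable ?_
  · have := (Continuous.ae_eq_iff_eq (volume : Measure V3) hD (continuous_const (y := (0:ℝ)))).1 key
    have := congrFun this x
    exact sub_eq_zero.1 this
  intro g hg hgc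
  have hg1 := smooth_one hg
  have hgv : ∀ j, ContDiff ℝ 1 (fun x => g x * cpt j v x) := fun j => hg1.mul (cpt_cd hv j)
  have hgvc : ∀ j, HasCompactSupport (fun x => g x * cpt j v x) := fun j => hgc.mul_right
  have hgd : ∀ j a x, dk a (fun x => g x * cpt j v x) x = g x * dk a (cpt j v) x + dk a g x * cpt j v x := by
    intro j a x
    simp only [dk]
    rw [fderiv_fun_mul (hg1.differentiable (by simp) x) ((cpt_cd hv j).differentiable (by simp) x)]
    simp [mul_comm]
  have z := ((((Zi.ibp hg1 hgc (cpt_cd hw i) k).sub (Zi.ibp hg1 hgc (cpt_cd hw k) i)).sub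
    ((Zi.ibp hg1 hgc (cpt_cd hv i) k).sub (Zi.ibp hg1 hgc (cpt_cd hv k) i))).add
    (Zi.swap hg1 hgc hp hpp k i)).sub
    (Zi.sum fun j => Zi.swap (hgv j) (hgvc j) (cpt_cd hl j) (cpt_per hlp j) k i)
  rw [← z.2]
  congr 1
  funext x
  have e : ∀ a, cpt a v x + ∑ j, dk a (cpt j l) x * cpt j v x = cpt a w x + dk a p x := fun a =>
    congrFun (h x) a
  have ei := e i
  have ek := e k
  simp only [hgd, Om, smul_eq_mul, Fin.sum_univ_three] at ei ek ⊢
  linear_combination dk k g x * ei - dk i g x * ek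


lemma dk_fadd {f g : V3 → ℝ} (hf : Differentiable ℝ f) (hg : Differentiable ℝ g) (k : Fin 3) (x : V3) :
    dk k (fun y => f y + g y) x = dk k f x + dk k g x := by
  simp only [dk]; rw [fderiv_fun_add (hf x) (hg x)]; rfl

lemma dk_fsub {f g : V3 → ℝ} (hf : Differentiable ℝ f) (hg : Differentiable ℝ g) (k : Fin 3) (x : V3) :
    dk k (fun y => f y - g y) x = dk k f x - dk k g x := by
  simp only [dk]; rw [fderiv_fun_sub (hf x) (hg x)]; rfl

lemma dk_fsum {f : Fin 3 → V3 → ℝ} (hf : ∀ j, Differentiable ℝ (f j)) (k : Fin 3) (x : V3) :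
    dk k (fun y => ∑ j, f j y) x = ∑ j, dk k (f j) x := by
  simp only [dk]; rw [fderiv_fun_sum (fun j _ => hf j x)]; simp

theorem main_est {α : ℝ} (hα : α ∈ Ioo (0:ℝ) 1) : ∃ C, 0 ≤ C ∧ ∀ (n : ℕ) (w f : V3 → V3) (p : V3 → ℝ)
    (Ω : Fin 3 → Fin 3 → V3 → ℝ) (A : ℝ), ContDiff ℝ 1 w → Per w → (∀ x, ∑ k, dk k (cpt k w) x = 0) →
    ContDiff ℝ 1 p → Per p → (∀ i x, cpt i f x = cpt i w x + dk i p x) →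
    (∀ k i x, dk k (cpt i w) x - dk i (cpt k w) x = Ω k i x) →
    (∀ k i, HB n α A (Ω k i)) → (∀ i x, ‖cpt i f x‖ ≤ A) → ∀ i, HB (n+1) α (C * A) (cpt i w) := by
  obtain ⟨C, hC, hS⟩ := schauder hα
  refine ⟨2 * (1 + C), by positivity, ?_⟩
  intro n w f p Ω A hw hwp hdiv hp hpp hf hcurl hΩ hfA i
  have hA : 0 ≤ A := (hΩ 0 0).nonneg
  refine HB_limit hα.1 (n+1) ℝ (fun N => MN N (cpt i w)) _ (fun N => ?_)
    (MN_unif (cpt_cd hw i) (cpt_per hwp i))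
  have hwc := fun i => cpt_cd hw i
  have hwpc := fun i => cpt_per hwp i
  set W : Fin 3 → V3 → ℝ := fun i => MN N (cpt i w) with hW
  have hWs : ∀ i, ContDiff ℝ ∞ (W i) := fun i => MN_smooth N (hwc i).continuous
  have hWp : ∀ i, Per (W i) := fun i => MN_per N (hwpc i)
  have hWd : ∀ k i, dk k (W i) = MN N (dk k (cpt i w)) := fun k i => MN_dk N (hwc i) (hwpc i) k
  have hWdd : ∀ k i, Differentiable ℝ (dk k (W i)) := fun k i =>
    (smooth_dk (hWs i) k).differentiable (by simp)
  have hwdc := fun k i => cont_dk (hwc i) k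
  have hΩc : ∀ k i, Continuous (Ω k i) := fun k i => (hΩ k i).cd.continuous
  have hΩp : ∀ k i, Per (Ω k i) := by
    intro k i x m
    rw [← hcurl, ← hcurl, per_dk (hwpc i) k x m, per_dk (hwpc k) i x m]
  have hFs : ∀ k i, ContDiff ℝ ∞ (MN N (Ω k i)) := fun k i => MN_smooth N (hΩc k i)
  have hc : ∀ k i x, dk k (W i) x - dk i (W k) x = MN N (Ω k i) x := by
    intro k i x
    rw [hWd, hWd]
    have := MN_sub N (hwdc k i) (hwdc i k)
    have e : Ω k i = fun x => dk k (cpt i w) x - dk i (cpt k w) x := by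
      funext x; exact (hcurl k i x).symm
    rw [e, this]
  have hd : ∀ x, ∑ k, dk k (W k) x = 0 := by
    intro x
    simp only [hWd, Fin.sum_univ_three]
    have h1 := MN_add N ((hwdc 0 0).add (hwdc 1 1)) (hwdc 2 2)
    have h2 := MN_add N (hwdc 0 0) (hwdc 1 1)
    have e : (fun x => (dk 0 (cpt 0 w) x + dk 1 (cpt 1 w) x) + dk 2 (cpt 2 w) x) = fun _ => 0 := by
      funext x; rw [← hdiv x, Fin.sum_univ_three]
    have h3 := congrFun h1 x
    have h4 := congrFun h2 x
    simp only [Pi.add_apply] at h3 h4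
    rw [← h4]
    refine Eq.trans h3.symm ?_
    rw [e]; simp [MN, Av]
  have hlap : ∀ x, ∑ k, dk k (dk k (W i)) x = ∑ k, dk k (MN N (Ω k i)) x := by
    intro x
    have h1 : ∀ k, dk k (dk k (W i)) x = dk i (dk k (W k)) x + dk k (MN N (Ω k i)) x := by
      intro k
      have e : dk k (W i) = fun x => dk i (W k) x + MN N (Ω k i) x := by
        funext x; rw [← hc]; ring
      rw [e, dk_fadd (hWdd _ _) ((hFs k i).differentiable (by simp)), dk_comm (hWs k) i k]
    simp_rw [h1]
    rw [Finset.sum_add_distrib, ← dk_fsum (fun k => hWdd k k)]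
    have e : (fun y => ∑ j, dk j (W j) y) = fun _ => 0 := funext hd
    rw [e]; simp [dk]
  have hfd := hS n ℝ (W i) (fun k => MN N (Ω k i)) A (hWs i) (hWp i) (fun k => hFs k i)
    (fun k => MN_per N (hΩp k i)) hlap (fun k => MN_HB n ℝ _ A N (hΩ k i) (hΩp k i))
  have hWdiff : Differentiable ℝ (W i) := (hWs i).differentiable (by simp)
  have hlip : ∀ x y, ‖W i x - W i y‖ ≤ C * A * ‖x - y‖ := fun x y =>
    Convex.norm_image_sub_le_of_norm_fderiv_le (𝕜 := ℝ) (s := univ)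
    (fun x _ => hWdiff x) (fun x _ => ((HB.zero_iff).1 (hfd.of_le (Nat.zero_le n))).2.1 x)
      convex_univ (mem_univ _) (mem_univ _)
  have hfc : Continuous (cpt i f) := by
    have : cpt i f = fun x => cpt i w x + dk i p x := funext (hf i)
    rw [this]; exact (hwc i).continuous.add (cont_dk hp i)
  have hPi : ∀ x, dk i (MN N p) x = MN N (cpt i f) x - W i x := by
    intro x
    rw [MN_dk N hp hpp]
    have e : dk i p = fun x => cpt i f x - cpt i w x := by funext x; rw [hf]; ring
    rw [e, MN_sub N hfc (hwc i).continuous]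
  have hsup : ∀ x, ‖W i x‖ ≤ (1 + C) * A := by
    intro x
    rw [← norm_neg]
    refine per_sup (u := MN N p) ((MN_smooth N hp.continuous).differentiable (by simp)) (MN_per N hpp) i
      (fun x => - W i x) ?_ x
    intro x s hs
    rw [hPi]
    have h1 := MN_norm_le N (hfA i) (x + s • e3 i)
    have h2 := hlip (x + s • e3 i) x
    have h3 : ‖x + s • e3 i - x‖ ≤ 1 := by
      rw [add_sub_cancel_left, norm_smul, e3_norm, mul_one, Real.norm_eq_abs, abs_of_nonneg hs.1]
      exact hs.2.le
    have h4 : C * A * ‖x + s • e3 i - x‖ ≤ C * A * 1 := mul_le_mul_of_nonneg_left h3 (by positivity)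
    have e : MN N (cpt i f) (x + s • e3 i) - W i (x + s • e3 i) - - W i x
      = MN N (cpt i f) (x + s • e3 i) - (W i (x + s • e3 i) - W i x) := by ring
    rw [e]
    refine (norm_sub_le _ _).trans ?_
    linarith
  rw [HB.succ_iff]
  refine ⟨hWdiff, HB.zero_iff.2 ⟨hWdiff.continuous, fun x => (hsup x).trans ?_, fun x y => ?_⟩,
    hfd.mono ?_⟩
  · nlinarith [mul_nonneg hC hA]
  · have := interp_hol hα hsup (fun x y => (hlip x y).trans (mul_le_mul_of_nonneg_right
      (by linarith) (norm_nonneg _))) x y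
    rw [← mul_assoc] at this
    exact this
  · nlinarith [mul_nonneg hC hA]

lemma HB.dkc {n : ℕ} {α K : ℝ} {v : V3 → V3} (hv : Differentiable ℝ v) (h : HB n α K (fderiv ℝ v))
    (k j : Fin 3) : HB n α K (dk k (cpt j v)) := by
  have h1 := (h.clm (ContinuousLinearMap.apply ℝ V3 (e3 k))).clm
    (ContinuousLinearMap.proj (R := ℝ) (φ := fun _ : Fin 3 => ℝ) j)
  have e : (fun x => (ContinuousLinearMap.proj (R := ℝ) (φ := fun _ : Fin 3 => ℝ) j)
      (ContinuousLinearMap.apply ℝ V3 (e3 k) (fderiv ℝ v x))) = dk k (cpt j v) := by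
    funext x
    simp only [dk]
    have := ((ContinuousLinearMap.proj (R := ℝ) (φ := fun _ : Fin 3 => ℝ) j).hasFDerivAt.comp x (hv x).hasFDerivAt).fderiv
    have h2 : ((ContinuousLinearMap.proj (R := ℝ) (φ := fun _ : Fin 3 => ℝ) j) ∘ v) = cpt j v := rfl
    rw [h2] at this
    rw [this]; rfl
  rw [e] at h1
  refine h1.mono ?_
  have hK := h.nonneg
  have n1 : ‖(ContinuousLinearMap.proj (R := ℝ) (φ := fun _ : Fin 3 => ℝ) j)‖ ≤ 1 :=
    ContinuousLinearMap.opNorm_le_bound _ zero_le_one fun x => by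
      simpa using norm_le_pi_norm x j
  have n2 : ‖(ContinuousLinearMap.apply ℝ V3 (e3 k))‖ ≤ 1 :=
    ContinuousLinearMap.opNorm_le_bound _ zero_le_one fun T => by
      have := T.le_opNorm (e3 k)
      rw [e3_norm] at this
      simpa using this
  calc _ ≤ 1 * (1 * K) := by gcongr
    _ = K := by ring

lemma HB.cptb {n : ℕ} {α K : ℝ} {v : V3 → V3} (h : HB n α K v) (j : Fin 3) (x : V3) :
    ‖cpt j v x‖ ≤ K :=
  (norm_le_pi_norm (v x) j).trans ((HB.zero_iff.1 (h.of_le (Nat.zero_le n))).2.1 x)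

lemma HB.of_cpt {n : ℕ} {α K : ℝ} {v : V3 → V3} (h : ∀ j, HB n α K (cpt j v)) : HB n α (3 * K) v := by
  have h1 := fun j => (h j).clm (ContinuousLinearMap.toSpanSingleton ℝ (e3 j))
  have h2 := ((h1 0).add (h1 1)).add (h1 2)
  simp only [ContinuousLinearMap.norm_toSpanSingleton, e3_norm] at h2
  have e : v = fun x => (ContinuousLinearMap.toSpanSingleton ℝ (e3 0)) (cpt 0 v x) +
      (ContinuousLinearMap.toSpanSingleton ℝ (e3 1)) (cpt 1 v x) +
      (ContinuousLinearMap.toSpanSingleton ℝ (e3 2)) (cpt 2 v x) := by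
    funext x
    conv_lhs => rw [v3_sum (v x)]
    simp [Fin.sum_univ_three, cpt]
  rw [e]
  exact h2.mono (by linarith)


lemma HB.mem {n : ℕ} {α K : ℝ} {v : V3 → V3} (h : HB n α K v) : MemHol n α v :=
  ⟨h.cd, K, h.ho n le_rfl⟩

lemma jac_HB {n : ℕ} {α L : ℝ} (hα : α ∈ Ioo (0:ℝ) 1) {l : V3 → V3} (hl : MemHol (n+1) α l) (hp : Per l)
    (hL : holNorm n α (jac l) ≤ L) : HB n α (2 * L) (fderiv ℝ l) := by
  have h1 : MemHol n α (fderiv ℝ l) := by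
    obtain ⟨hc, C, hC⟩ := hl
    have hc1 : ContDiff ℝ ((n:WithTop ℕ∞)+1) l := by exact_mod_cast hc
    refine ⟨hc1.fderiv_right le_rfl, C, fun x y => ?_⟩
    rw [← iter_succ_sub]; exact hC x y
  refine (HB.of_mem hα h1 (per_fderiv hp)).mono ?_
  have : holNorm n α (fderiv ℝ l) ≤ L := hL
  linarith

lemma cpt_sub (j : Fin 3) (a b : V3 → V3) : cpt j (fun x => a x - b x) = fun x => cpt j a x - cpt j b x := rfl

lemma Om_diff {l₁ l₂ v₁ v₂ : V3 → V3} (hl₁ : ContDiff ℝ 1 l₁) (hl₂ : ContDiff ℝ 1 l₂)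
    (hv₁ : ContDiff ℝ 1 v₁) (hv₂ : ContDiff ℝ 1 v₂) (k i : Fin 3) (x : V3) :
    Om l₁ v₁ k i x - Om l₂ v₂ k i x =
    dk k (cpt i (fun x => v₁ x - v₂ x)) x - dk i (cpt k (fun x => v₁ x - v₂ x)) x
    + (((dk i (cpt 0 (fun x => l₁ x - l₂ x)) x * dk k (cpt 0 v₁) x
          + dk i (cpt 0 l₂) x * dk k (cpt 0 (fun x => v₁ x - v₂ x)) x)
        - (dk k (cpt 0 (fun x => l₁ x - l₂ x)) x * dk i (cpt 0 v₁) x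
          + dk k (cpt 0 l₂) x * dk i (cpt 0 (fun x => v₁ x - v₂ x)) x))
      + ((dk i (cpt 1 (fun x => l₁ x - l₂ x)) x * dk k (cpt 1 v₁) x
          + dk i (cpt 1 l₂) x * dk k (cpt 1 (fun x => v₁ x - v₂ x)) x)
        - (dk k (cpt 1 (fun x => l₁ x - l₂ x)) x * dk i (cpt 1 v₁) x
          + dk k (cpt 1 l₂) x * dk i (cpt 1 (fun x => v₁ x - v₂ x)) x))
      + ((dk i (cpt 2 (fun x => l₁ x - l₂ x)) x * dk k (cpt 2 v₁) x
          + dk i (cpt 2 l₂) x * dk k (cpt 2 (fun x => v₁ x - v₂ x)) x)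
        - (dk k (cpt 2 (fun x => l₁ x - l₂ x)) x * dk i (cpt 2 v₁) x
          + dk k (cpt 2 l₂) x * dk i (cpt 2 (fun x => v₁ x - v₂ x)) x))) := by
  have d : ∀ {u : V3 → V3}, ContDiff ℝ 1 u → ∀ j, Differentiable ℝ (cpt j u) := fun hu j =>
    (cpt_cd hu j).differentiable (by simp)
  have e1 : ∀ a j, dk a (cpt j (fun x => l₁ x - l₂ x)) x = dk a (cpt j l₁) x - dk a (cpt j l₂) x :=
    fun a j => dk_fsub (d hl₁ j) (d hl₂ j) a x
  have e2 : ∀ a j, dk a (cpt j (fun x => v₁ x - v₂ x)) x = dk a (cpt j v₁) x - dk a (cpt j v₂) x :=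
    fun a j => dk_fsub (d hv₁ j) (d hv₂ j) a x
  simp only [e1, e2, Om, Fin.sum_univ_three]
  ring

lemma wf_diff {l₁ l₂ v₁ v₂ : V3 → V3} (hl₁ : ContDiff ℝ 1 l₁) (hl₂ : ContDiff ℝ 1 l₂)
    (i : Fin 3) (x : V3) :
    weberField l₁ v₁ x i - weberField l₂ v₂ x i =
    cpt i (fun x => v₁ x - v₂ x) x
    + ((dk i (cpt 0 (fun x => l₁ x - l₂ x)) x * cpt 0 v₁ x
          + dk i (cpt 0 l₂) x * cpt 0 (fun x => v₁ x - v₂ x) x)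
      + (dk i (cpt 1 (fun x => l₁ x - l₂ x)) x * cpt 1 v₁ x
          + dk i (cpt 1 l₂) x * cpt 1 (fun x => v₁ x - v₂ x) x)
      + (dk i (cpt 2 (fun x => l₁ x - l₂ x)) x * cpt 2 v₁ x
          + dk i (cpt 2 l₂) x * cpt 2 (fun x => v₁ x - v₂ x) x)) := by
  have d : ∀ {u : V3 → V3}, ContDiff ℝ 1 u → ∀ j, Differentiable ℝ (cpt j u) := fun hu j =>
    (cpt_cd hu j).differentiable (by simp)
  have e1 : ∀ a j, dk a (cpt j (fun x => l₁ x - l₂ x)) x = dk a (cpt j l₁) x - dk a (cpt j l₂) x :=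
    fun a j => dk_fsub (d hl₁ j) (d hl₂ j) a x
  simp only [e1]
  simp only [weber_cmp, cpt_sub, Fin.sum_univ_three]
  ring


end helpers

/-- Lipschitz estimate for the operator `W(ℓ,v) = P[(I + ∇ℓ)ᵀ v]`. -/
theorem weber_operator_lipschitz
    (l : ℕ) (hl : 1 ≤ l) (α : ℝ) (hα : α ∈ Set.Ioo (0:ℝ) 1) (L : ℝ) (hL : 0 < L) :
    ∃ C > 0, ∀ (V : ℝ) (l₁ l₂ v₁ v₂ w₁ w₂ : V3 → V3),
      MemHol l α l₁ → Per l₁ → MemHol l α l₂ → Per l₂ →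
      MemHol l α v₁ → Per v₁ → MemHol l α v₂ → Per v₂ →
      holNorm (l-1) α (jac l₁) ≤ L → holNorm (l-1) α (jac l₂) ≤ L →
      holNorm l α v₁ ≤ V → holNorm l α v₂ ≤ V →
      IsLeray (weberField l₁ v₁) w₁ → IsLeray (weberField l₂ v₂) w₂ →
      holNorm l α (fun x => w₁ x - w₂ x)
        ≤ C * (V * holNorm l α (fun x => l₁ x - l₂ x)
          + holNorm l α (fun x => v₁ x - v₂ x)) := by
  obtain ⟨n, rfl⟩ : ∃ n, l = n + 1 := ⟨l - 1, by omega⟩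
  simp only [Nat.add_sub_cancel]
  obtain ⟨C, hC, hmain⟩ := main_est hα
  set c : ℝ := 2 * 2 ^ n with hc
  have hc2 : 2 ≤ c := by
    have : (1:ℝ) ≤ 2 ^ n := one_le_pow₀ (by norm_num)
    rw [hc]; linarith
  refine ⟨((n + 1 : ℕ) + 2) * (3 * (C * (4 + 24 * c * (1 + L)))) + 1, by positivity, ?_⟩
  intro V l₁ l₂ v₁ v₂ w₁ w₂ hl₁ hl₁p hl₂ hl₂p hv₁ hv₁p hv₂ hv₂p _ hL₂ hV₁ _ hw₁ hw₂
  obtain ⟨hw₁p, hw₁c, hw₁d, p₁, hp₁p, hp₁d, hp₁⟩ := hw₁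
  obtain ⟨hw₂p, hw₂c, hw₂d, p₂, hp₂p, hp₂d, hp₂⟩ := hw₂
  have hV : 0 ≤ V := (holNorm_nonneg _ _ _).trans hV₁
  have one : ∀ {u : V3 → V3}, MemHol (n+1) α u → ContDiff ℝ 1 u := fun hu => hu.1.of_le (by simp)
  have hp₁c := p_C1 (weber_cont (one hl₁) (one hv₁)) hw₁c.continuous hp₁d hp₁
  have hp₂c := p_C1 (weber_cont (one hl₂) (one hv₂)) hw₂c.continuous hp₂d hp₂
  have hlm := ((HB.of_mem hα hl₁ hl₁p).sub (HB.of_mem hα hl₂ hl₂p)).mem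
  have hvm := ((HB.of_mem hα hv₁ hv₁p).sub (HB.of_mem hα hv₂ hv₂p)).mem
  have per_sub : ∀ {a b : V3 → V3}, Per a → Per b → Per (fun x => a x - b x) := fun ha hb x k => by
    simp only [ha x k, hb x k]
  have hlH := HB.of_mem hα hlm (per_sub hl₁p hl₂p)
  have hvH := HB.of_mem hα hvm (per_sub hv₁p hv₂p)
  have hv₁H := (HB.of_mem hα hv₁ hv₁p).mono (K' := 2 * V) (by linarith)
  have hl₂H := jac_HB hα hl₂ hl₂p hL₂
  have hNl := holNorm_nonneg (n+1) α (fun x => l₁ x - l₂ x)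
  have hNv := holNorm_nonneg (n+1) α (fun x => v₁ x - v₂ x)
  set Nl := holNorm (n+1) α (fun x => l₁ x - l₂ x)
  set Nv := holNorm (n+1) α (fun x => v₁ x - v₂ x)
  have cl := fun k j => (HB.succ_iff.1 hlH).2.2.dkc (HB.succ_iff.1 hlH).1 k j
  have cv := fun k j => (HB.succ_iff.1 hvH).2.2.dkc (HB.succ_iff.1 hvH).1 k j
  have cv1 := fun k j => (HB.succ_iff.1 hv₁H).2.2.dkc (HB.succ_iff.1 hv₁H).1 k j
  have cl2 := fun k j => hl₂H.dkc ((one hl₂).differentiable (by simp)) k j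
  set S := V * Nl + Nv with hS
  have hS0 : 0 ≤ S := by positivity
  have hVN : 0 ≤ V * Nl := by positivity
  have hLN : 0 ≤ L * Nv := by positivity
  have hcVN : 0 ≤ c * (V * Nl) := by positivity
  have hcLN : 0 ≤ c * (L * Nv) := by positivity
  have hcN : 0 ≤ c * Nv := by positivity
  have hcLVN : 0 ≤ c * (L * (V * Nl)) := by positivity
  have hA1 : 4 * Nv + 6 * (c * (4 * (V * Nl)) + c * (4 * (L * Nv))) ≤ (4 + 24 * c * (1 + L)) * S := by
    rw [hS]; nlinarith
  have hm := hmain n (fun x => w₁ x - w₂ x) (fun x => weberField l₁ v₁ x - weberField l₂ v₂ x)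
    (fun x => p₁ x - p₂ x) (fun k i x => Om l₁ v₁ k i x - Om l₂ v₂ k i x)
    ((4 + 24 * c * (1 + L)) * S) (hw₁c.sub hw₂c) (per_sub hw₁p hw₂p) ?_ (hp₁c.sub hp₂c) ?_ ?_ ?_ ?_ ?_
  · have := (HB.of_cpt hm).holNorm_le
    refine this.trans ?_
    have e : ∀ a b d : ℝ, a * (3 * (C * (b * d))) = (a * (3 * (C * b))) * d := fun a b d => by ring
    rw [e, add_mul]
    linarith
  · intro x
    have e : ∀ k, dk k (cpt k (fun x => w₁ x - w₂ x)) x = dk k (cpt k w₁) x - dk k (cpt k w₂) x :=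
      fun k => dk_fsub ((cpt_cd hw₁c k).differentiable (by simp))
        ((cpt_cd hw₂c k).differentiable (by simp)) k x
    simp_rw [e]
    rw [Finset.sum_sub_distrib]
    have h1 : ∑ k, dk k (cpt k w₁) x = 0 := hw₁d x
    have h2 : ∑ k, dk k (cpt k w₂) x = 0 := hw₂d x
    rw [h1, h2, sub_zero]
  · intro x k
    simp only [hp₁p x k, hp₂p x k]
  · intro i x
    have h1 : weberField l₁ v₁ x i = w₁ x i + dk i p₁ x := congrFun (hp₁ x) i
    have h2 : weberField l₂ v₂ x i = w₂ x i + dk i p₂ x := congrFun (hp₂ x) i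
    rw [dk_fsub hp₁d hp₂d]
    simp only [cpt, Pi.sub_apply]
    rw [h1, h2]; ring
  · intro k i x
    have e : ∀ k i, dk k (cpt i (fun x => w₁ x - w₂ x)) x = dk k (cpt i w₁) x - dk k (cpt i w₂) x :=
      fun k i => dk_fsub ((cpt_cd hw₁c i).differentiable (by simp))
        ((cpt_cd hw₂c i).differentiable (by simp)) k x
    rw [e, e, ← curl_id (one hl₁) hl₁p (one hv₁) hw₁c hp₁c hp₁p hp₁ k i x,
      ← curl_id (one hl₂) hl₂p (one hv₂) hw₂c hp₂c hp₂p hp₂ k i x]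
    ring
  · intro k i
    have e : (fun x => Om l₁ v₁ k i x - Om l₂ v₂ k i x) = _ :=
      funext fun x => Om_diff (one hl₁) (one hl₂) (one hv₁) (one hv₂) k i x
    have T : ∀ j, HB n α (_) _ := fun j =>
      (((cl i j).mul (cv1 k j)).add ((cl2 i j).mul (cv k j))).sub
      (((cl k j).mul (cv1 i j)).add ((cl2 k j).mul (cv i j)))
    rw [e]
    refine (((cv k i).sub (cv i k)).add (((T 0).add (T 1)).add (T 2))).mono ?_
    rw [← hc]
    refine le_trans (le_of_eq ?_) hA1
    ring
  · intro i x
    have e : cpt i (fun x => weberField l₁ v₁ x - weberField l₂ v₂ x) x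
        = weberField l₁ v₁ x i - weberField l₂ v₂ x i := rfl
    rw [e, wf_diff (one hl₁) (one hl₂)]
    have bd : ∀ {K : ℝ} {g : V3 → ℝ}, HB n α K g → ‖g x‖ ≤ K := fun h =>
      (HB.zero_iff.1 (h.of_le (Nat.zero_le n))).2.1 x
    have T : ∀ j, ‖dk i (cpt j (fun x => l₁ x - l₂ x)) x * cpt j v₁ x
          + dk i (cpt j l₂) x * cpt j (fun x => v₁ x - v₂ x) x‖ ≤ 4 * (V * Nl) + 4 * (L * Nv) := by
      intro j
      refine (norm_add_le _ _).trans ?_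
      rw [norm_mul, norm_mul]
      have h1 := mul_le_mul (bd (cl i j)) (hv₁H.cptb j x) (norm_nonneg _) (by positivity)
      have h2 := mul_le_mul (bd (cl2 i j)) (hvH.cptb j x) (norm_nonneg _) (by positivity)
      linarith
    refine le_trans ?_ hA1
    refine (norm_add_le _ _).trans ?_
    have h0 := hvH.cptb i x
    have h3 := (norm_add_le _ _).trans (add_le_add ((norm_add_le _ _).trans (add_le_add (T 0) (T 1))) (T 2))
    refine (add_le_add h0 h3).trans ?_
    nlinarith
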